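/- Let K = {x ∈ ℝ^n : ‖x‖_p ≤ 1} and L = {x ∈ ℝ^n : ‖x‖_q ≤ 1} with 1 ≤ p < 2 < q ≤ ∞. Then d(K,L) ≥ max{ A_p · n^{1/2 − 1/q}, A_{q*} · n^{1/p − 1/2} }, where q* is the Hölder conjugate of q, and A_r = min{1, 2^{1/2 − 1/r}, 2^{1/2}(Γ((r+1)/2)/√π)^{1/r}} is the optimal lower Khintchine constant. -/

import Mathlib

open Pointwise
open scoped ENNReal

/-- The multiplicative Banach–Mazur distance between two subsets of `ℝ^n`. -/
noncomputable def bmDist (n : ℕ) (K L : Set (Fin n → ℝ)) : ℝ :=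
  sInf {r : ℝ | 1 ≤ r ∧ ∃ T : (Fin n → ℝ) ≃ₗ[ℝ] (Fin n → ℝ), L ⊆ T '' K ∧ T '' K ⊆ r • L}

/-- The optimal lower Khintchine constant `A_r`. -/
noncomputable def khintchineA (r : ℝ) : ℝ :=
  min (min 1 (2 ^ ((1 : ℝ) / 2 - 1 / r)))
    (2 ^ ((1 : ℝ) / 2) * (Real.Gamma ((r + 1) / 2) / Real.sqrt Real.pi) ^ (1 / r))

open MeasureTheory ProbabilityTheory Set
open scoped BigOperators

/-
With `κ_p = ∫₀^∞ (1 - cos u) u ^ (-p - 1) du` one has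
`κ_p |x| ^ p = ∫₀^∞ (1 - cos (x u)) u ^ (-p - 1) du`, so the `p`-th moment of a Rademacher sum
`∑ εᵢ aᵢ` is an integral of `1 - ∏ cos (aᵢ u)`. Normalise `∑ aᵢ² = 1`. If no `aᵢ²` exceeds
`1 / 2`, the arithmetic-geometric mean inequality with weights `aᵢ²` bounds the product by an
average of `|cos (aᵢ u)| ^ sᵢ` with `sᵢ = aᵢ⁻² ≥ 2`, and it suffices that, against
`u ^ (-p - 1) du`, the integral of `1 - |cos u| ^ s` is at least that of `1 - exp (-s u² / 2)`.
The distribution functions of `|cos u|` and of `exp (-u² / 2)` cross only once, which reduces all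
`s ≥ 2` to `s = 2`; there the comparison says that the Gaussian moment `γ_p` is at most
`2 ^ (p / 2 - 1)`. A large coefficient is split off by induction on the number of terms, for which
`(1 + x) ^ (p / 2)` has to be strengthened to the function `Φ` of Nazarov and Podkorytov.
Exponents below the one with `γ_p = 2 ^ (p / 2 - 1)` follow by interpolating with the exponent `2`.
This is Khintchine's inequality with Haagerup's constant.

For the distance, let `T` satisfy `L ⊆ T K ⊆ r L`. The columns of the matrix `M` of `T⁻¹` have
`ℓ^p` norm at least `1 / r`, since `T` carries them to unit vectors. On the other hand `M` maps
the points `n ^ (-1 / q) ε` of `L`, `ε` a sign vector, into the unit ball of `ℓ^p`; averaging over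
`ε` and applying Khintchine's inequality to each row gives `A_p n ^ (1 / 2 - 1 / q) ≤ r`. The
transpose of `M` maps the polar body of `K` into that of `L`, which yields the second bound.
-/

/-- The Lévy measure `u ^ (-p - 1) du` on `(0, ∞)` of the symmetric `p`-stable law, in which
`|x| ^ p` is, up to a constant, the integral of `1 - cos (x * u)`. -/
noncomputable def stableMeasure (p : ℝ) : Measure ℝ :=
  (volume.restrict (Ioi 0)).withDensity fun u => ENNReal.ofReal (u ^ (-p - 1))

/-- The constant `κ_p` in `∫ (1 - cos (x * u)) dν = κ_p |x| ^ p` for the Lévy measure `ν`. -/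
noncomputable def stableConst (p : ℝ) : ℝ := ∫ u, (1 - Real.cos u) ∂stableMeasure p

section StableMeasure

variable {p : ℝ}

instance : SFinite (stableMeasure p) := by unfold stableMeasure; infer_instance

instance : NullSingletonClass (stableMeasure p) := by unfold stableMeasure; infer_instance

lemma integral_stableMeasure (φ : ℝ → ℝ) :
    ∫ u, φ u ∂stableMeasure p = ∫ u in Ioi 0, u ^ (-p - 1) * φ u := by
  rw [stableMeasure, integral_withDensity_eq_integral_toReal_smul (by fun_prop) (by simp)]
  refine setIntegral_congr_fun measurableSet_Ioi fun u hu => ?_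
  simp [ENNReal.toReal_ofReal (Real.rpow_nonneg (le_of_lt hu) _)]

lemma integrable_stableMeasure_iff (φ : ℝ → ℝ) :
    Integrable φ (stableMeasure p) ↔ IntegrableOn (fun u => u ^ (-p - 1) * φ u) (Ioi 0) := by
  rw [stableMeasure, integrable_withDensity_iff_integrable_smul' (by fun_prop) (by simp)]
  refine integrableOn_congr_fun (fun u hu => ?_) measurableSet_Ioi
  simp [ENNReal.toReal_ofReal (Real.rpow_nonneg (le_of_lt hu) _)]

lemma ae_pos_stableMeasure : ∀ᵐ u ∂stableMeasure p, 0 < u :=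
  (withDensity_absolutelyContinuous _ _).ae_le (ae_restrict_mem measurableSet_Ioi)

lemma integrable_stableMeasure_of_abs_le (hp0 : 0 < p) (hp2 : p < 2) {φ : ℝ → ℝ} {C D : ℝ}
    (hφ : Measurable φ) (hC : ∀ u, |φ u| ≤ C * u ^ 2) (hD : ∀ u, |φ u| ≤ D) :
    Integrable φ (stableMeasure p) := by
  have hm : AEStronglyMeasurable (fun u => u ^ (-p - 1) * φ u) volume :=
    Measurable.aestronglyMeasurable (by fun_prop)
  rw [integrable_stableMeasure_iff, ← Ioc_union_Ioi_eq_Ioi (zero_le_one (α := ℝ))]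
  refine IntegrableOn.union ?near_zero ?near_infinity
  case near_zero =>
    have hi : IntegrableOn (fun u : ℝ => u ^ (1 - p) * C) (Ioc 0 1) :=
      ((intervalIntegrable_iff_integrableOn_Ioc_of_le zero_le_one).1
        (intervalIntegral.intervalIntegrable_rpow' (by linarith))).mul_const C
    refine hi.mono' hm.restrict ?_
    filter_upwards [ae_restrict_mem measurableSet_Ioc] with u hu
    have hpow : u ^ (1 - p) = u ^ (-p - 1) * u ^ 2 := by
      rw [← Real.rpow_natCast, ← Real.rpow_add hu.1]
      norm_num
      ring_nf
    rw [norm_mul, Real.norm_eq_abs, Real.norm_eq_abs, abs_of_pos (Real.rpow_pos_of_pos hu.1 _),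
      hpow, mul_assoc, mul_comm (u ^ 2)]
    exact mul_le_mul_of_nonneg_left (hC u) (Real.rpow_nonneg hu.1.le _)
  case near_infinity =>
    have hi : IntegrableOn (fun u : ℝ => u ^ (-p - 1) * D) (Ioi 1) :=
      (integrableOn_Ioi_rpow_of_lt (by linarith) one_pos).mul_const D
    refine hi.mono' hm.restrict ?_
    filter_upwards [ae_restrict_mem measurableSet_Ioi] with u hu
    have hu0 : (0 : ℝ) < u := one_pos.trans hu
    rw [norm_mul, Real.norm_eq_abs, Real.norm_eq_abs, abs_of_pos (Real.rpow_pos_of_pos hu0 _)]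
    exact mul_le_mul_of_nonneg_left (hD u) (Real.rpow_nonneg hu0.le _)

lemma integrable_one_sub_cos_mul (hp0 : 0 < p) (hp2 : p < 2) (x : ℝ) :
    Integrable (fun u => 1 - Real.cos (x * u)) (stableMeasure p) := by
  refine integrable_stableMeasure_of_abs_le hp0 hp2 (C := x ^ 2 / 2) (D := 2) (by fun_prop)
    (fun u => ?_) fun u => ?_
  all_goals rw [abs_of_nonneg (by linarith [Real.cos_le_one (x * u)])]
  · linarith [Real.one_sub_sq_div_two_le_cos (x := x * u), mul_pow x u 2]
  · linarith [Real.neg_one_le_cos (x * u)]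

lemma integral_comp_mul_left_stableMeasure {x : ℝ} (hx : 0 < x) (φ : ℝ → ℝ) :
    ∫ u, φ (x * u) ∂stableMeasure p = x ^ p * ∫ u, φ u ∂stableMeasure p := by
  have hsubst := integral_comp_mul_left_Ioi (fun u => u ^ (-p - 1) * φ u) 0 hx
  have hpull : ∫ u in Ioi (0 : ℝ), (x * u) ^ (-p - 1) * φ (x * u)
      = x ^ (-p - 1) * ∫ u in Ioi (0 : ℝ), u ^ (-p - 1) * φ (x * u) := by
    rw [← integral_const_mul]
    refine setIntegral_congr_fun measurableSet_Ioi fun u hu => ?_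
    rw [Real.mul_rpow hx.le (le_of_lt hu), mul_assoc]
  rw [mul_zero, smul_eq_mul, hpull] at hsubst
  rw [integral_stableMeasure, integral_stableMeasure]
  have hpow : x ^ p * x ^ (-p - 1) = x⁻¹ := by
    rw [← Real.rpow_add hx, ← Real.rpow_neg_one]; ring_nf
  have hx' : x * x⁻¹ = 1 := mul_inv_cancel₀ hx.ne'
  calc _ = x * (x ^ p * x ^ (-p - 1)) * ∫ u in Ioi (0 : ℝ), u ^ (-p - 1) * φ (x * u) := by
        rw [hpow, hx', one_mul]
    _ = x * x ^ p * (x ^ (-p - 1) * ∫ u in Ioi (0 : ℝ), u ^ (-p - 1) * φ (x * u)) := by ring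
    _ = x ^ p * (x * x⁻¹) * ∫ u in Ioi (0 : ℝ), u ^ (-p - 1) * φ u := by rw [hsubst]; ring
    _ = _ := by rw [hx', mul_one]

lemma integral_one_sub_cos_mul (hp0 : 0 < p) (x : ℝ) :
    ∫ u, (1 - Real.cos (x * u)) ∂stableMeasure p = |x| ^ p * stableConst p := by
  have habs : ∀ u, Real.cos (x * u) = Real.cos (|x| * u) := fun u => by
    rcases abs_choice x with h | h <;> simp [h]
  simp only [habs]
  rcases (abs_nonneg x).eq_or_lt with h | h
  · simp [← h, Real.zero_rpow hp0.ne']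
  · exact integral_comp_mul_left_stableMeasure h fun u => 1 - Real.cos u

lemma stableConst_pos (hp0 : 0 < p) (hp2 : p < 2) : 0 < stableConst p := by
  have hinteg : Integrable (fun u => 1 - Real.cos u) (stableMeasure p) := by
    simpa using integrable_one_sub_cos_mul hp0 hp2 1
  rw [integrable_stableMeasure_iff] at hinteg
  rw [stableConst, integral_stableMeasure]
  refine (setIntegral_pos_iff_support_of_nonneg_ae ?_ hinteg).2 ?_
  · filter_upwards [ae_restrict_mem measurableSet_Ioi] with u hu
    exact mul_nonneg (Real.rpow_nonneg (le_of_lt hu) _) (sub_nonneg.2 (Real.cos_le_one u))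
  · have hsub : Ioo 0 1 ⊆ Function.support (fun u => u ^ (-p - 1) * (1 - Real.cos u)) ∩ Ioi 0 := by
      refine fun u hu => ⟨(mul_pos (Real.rpow_pos_of_pos hu.1 _) (sub_pos.2 ?_)).ne', hu.1⟩
      rw [← Real.cos_zero]
      exact Real.cos_lt_cos_of_nonneg_of_le_pi le_rfl (by linarith [hu.2, Real.pi_gt_three]) hu.1
    exact lt_of_lt_of_le (by simp) (measure_mono hsub)

lemma stableMeasure_Ioi (hp0 : 0 < p) {a : ℝ} (ha : 0 < a) :
    stableMeasure p (Ioi a) = ENNReal.ofReal (a ^ (-p) / p) := by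
  have hexp : -p - 1 < -1 := by linarith
  rw [stableMeasure, withDensity_apply _ measurableSet_Ioi,
    Measure.restrict_restrict measurableSet_Ioi, inter_eq_left.2 (Ioi_subset_Ioi ha.le),
    ← ofReal_integral_eq_lintegral_ofReal (integrableOn_Ioi_rpow_of_lt hexp ha)
      ((ae_restrict_mem measurableSet_Ioi).mono fun u hu =>
        Real.rpow_nonneg (ha.trans hu).le _),
    integral_Ioi_rpow_of_lt hexp ha]
  congr 1
  rw [sub_add_cancel, neg_div_neg_eq]

lemma stableMeasure_Ioc (hp0 : 0 < p) {a b : ℝ} (ha : 0 < a) (hab : a ≤ b) :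
    stableMeasure p (Ioc a b) = ENNReal.ofReal ((a ^ (-p) - b ^ (-p)) / p) := by
  have hb := ha.trans_le hab
  rw [← Ioi_sdiff_Ioi, measure_sdiff (Ioi_subset_Ioi hab) measurableSet_Ioi.nullMeasurableSet
    (by simp [stableMeasure_Ioi hp0 hb]), stableMeasure_Ioi hp0 ha, stableMeasure_Ioi hp0 hb,
    ← ENNReal.ofReal_sub _ (by positivity), sub_div]

end StableMeasure

/-- The `p`-th absolute moment of a standard Gaussian variable. -/
noncomputable def gaussianAbsMoment (p : ℝ) : ℝ := ∫ x, |x| ^ p ∂gaussianReal 0 1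

section GaussianAbsMoment

variable {p : ℝ}

lemma gaussianAbsMoment_eq (hp : -1 < p) :
    gaussianAbsMoment p = 2 ^ (p / 2) * (Real.Gamma ((p + 1) / 2) / √Real.pi) := by
  have hhalf : ∫ x in Ioi (0 : ℝ), x ^ p * Real.exp (-(1 / 2) * x ^ 2)
      = √2 * 2 ^ (p / 2) * (1 / 2) * Real.Gamma ((p + 1) / 2) := by
    have h := integral_rpow_mul_exp_neg_mul_rpow (p := 2) (b := 1 / 2) two_pos hp (by norm_num)
    simp only [Real.rpow_two] at h
    rw [h, one_div, Real.inv_rpow zero_le_two, ← Real.rpow_neg zero_le_two, Real.sqrt_eq_rpow,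
      ← Real.rpow_add two_pos]
    ring_nf
  have hline := integral_comp_abs (f := fun x : ℝ => x ^ p * Real.exp (-(1 / 2) * x ^ 2))
  simp only [sq_abs] at hline
  have hdensity : ∀ x : ℝ, gaussianPDFReal 0 1 x • |x| ^ p
      = (√(2 * Real.pi))⁻¹ * (|x| ^ p * Real.exp (-(1 / 2) * x ^ 2)) := fun x => by
    rw [gaussianPDFReal, smul_eq_mul, sub_zero, NNReal.coe_one, mul_one, mul_one]
    ring_nf
  rw [gaussianAbsMoment, integral_gaussianReal_eq_integral_smul one_ne_zero]
  simp only [hdensity]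
  rw [integral_const_mul, hline, hhalf, Real.sqrt_mul zero_le_two]
  have hsqrt : √2 ≠ 0 := by positivity
  field_simp

lemma gaussianAbsMoment_pos (hp : -1 < p) : 0 < gaussianAbsMoment p := by
  have : 0 < Real.Gamma ((p + 1) / 2) := Real.Gamma_pos_of_pos (by linarith)
  rw [gaussianAbsMoment_eq hp]
  positivity

lemma integrable_abs_rpow_gaussianReal (hp : 0 < p) :
    Integrable (fun x => |x| ^ p) (gaussianReal 0 1) := by
  simpa [hp.le] using (memLp_id_gaussianReal' (μ := 0) (v := 1) (ENNReal.ofReal p)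
    ENNReal.ofReal_ne_top).integrable_norm_rpow (by simpa using hp) ENNReal.ofReal_ne_top

lemma integral_cos_mul_gaussianReal (u : ℝ) :
    ∫ x, Real.cos (x * u) ∂gaussianReal 0 1 = Real.exp (-(u ^ 2 / 2)) := by
  have hchar := charFun_gaussianReal (μ := 0) (v := 1) u
  have hinteg : Integrable (fun x : ℝ => Complex.exp (u * x * Complex.I)) (gaussianReal 0 1) := by
    refine (integrable_const (1 : ℝ)).mono' (by fun_prop) (ae_of_all _ fun x => ?_)
    rw [← Complex.ofReal_mul, Complex.norm_exp_ofReal_mul_I]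
  rw [charFun_apply_real] at hchar
  have hre := congrArg Complex.re hchar
  rw [← RCLike.re_eq_complex_re, ← integral_re hinteg] at hre
  have hval : (u * (0 : ℝ) * Complex.I - (1 : NNReal) * u ^ 2 / 2 : ℂ)
      = ((-(u ^ 2 / 2) : ℝ) : ℂ) := by
    push_cast
    ring
  rw [hval, RCLike.re_eq_complex_re, Complex.exp_ofReal_re] at hre
  rw [← hre]
  refine integral_congr_ae (ae_of_all _ fun x => ?_)
  change Real.cos (x * u) = (Complex.exp (u * x * Complex.I)).re
  rw [← Complex.ofReal_mul, Complex.exp_ofReal_mul_I_re, mul_comm]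

lemma integral_one_sub_exp_neg_sq (hp0 : 0 < p) (hp2 : p < 2) :
    ∫ u, (1 - Real.exp (-(u ^ 2 / 2))) ∂stableMeasure p
      = gaussianAbsMoment p * stableConst p := by
  have hnonneg : ∀ x u : ℝ, 0 ≤ 1 - Real.cos (x * u) := fun x u =>
    sub_nonneg.2 (Real.cos_le_one _)
  have hprod : Integrable (Function.uncurry fun x u : ℝ => 1 - Real.cos (x * u))
      ((gaussianReal 0 1).prod (stableMeasure p)) := by
    refine (integrable_prod_iff (Measurable.aestronglyMeasurable (by fun_prop))).2
      ⟨ae_of_all _ (integrable_one_sub_cos_mul hp0 hp2), ?_⟩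
    simp only [Function.uncurry, Real.norm_eq_abs, abs_of_nonneg (hnonneg _ _),
      integral_one_sub_cos_mul hp0]
    exact (integrable_abs_rpow_gaussianReal hp0).mul_const _
  have hcos : ∀ u : ℝ, ∫ x, (1 - Real.cos (x * u)) ∂gaussianReal 0 1
      = 1 - Real.exp (-(u ^ 2 / 2)) := fun u => by
    rw [integral_sub (integrable_const _), integral_cos_mul_gaussianReal]
    · simp
    · exact (integrable_const (1 : ℝ)).mono' (by fun_prop)
        (ae_of_all _ fun x => Real.abs_cos_le_one _)
  have hswap := integral_integral_swap hprod
  simp only [hcos, integral_one_sub_cos_mul hp0] at hswap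
  rw [← hswap, integral_mul_const, gaussianAbsMoment]

lemma integral_one_sub_exp_neg_mul_sq (hp0 : 0 < p) (hp2 : p < 2) {s : ℝ} (hs : 0 < s) :
    ∫ u, (1 - Real.exp (-(u ^ 2 / 2)) ^ s) ∂stableMeasure p
      = s ^ (p / 2) * (gaussianAbsMoment p * stableConst p) := by
  have hpow : ∀ u : ℝ, Real.exp (-(u ^ 2 / 2)) ^ s = Real.exp (-((√s * u) ^ 2 / 2)) := fun u => by
    rw [← Real.exp_mul, mul_pow, Real.sq_sqrt hs.le]
    ring_nf
  simp only [hpow]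
  rw [integral_comp_mul_left_stableMeasure (Real.sqrt_pos.2 hs)
      fun u => 1 - Real.exp (-(u ^ 2 / 2)),
    integral_one_sub_exp_neg_sq hp0 hp2, Real.sqrt_eq_rpow, ← Real.rpow_mul hs.le]
  ring_nf

end GaussianAbsMoment

section LayerCake

variable {α : Type*} [MeasurableSpace α] {μ : Measure α} {f g : α → ℝ} {s : ℝ}

lemma integral_mul_abs_one_sub_rpow (hs : 1 ≤ s) {y : ℝ} (hy : 0 ≤ y) :
    ∫ t in 0..(1 - y), s * |1 - t| ^ (s - 1) = 1 - y ^ s := by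
  have habs : ∫ t in y..1, s * |t| ^ (s - 1) = ∫ t in y..1, s * t ^ (s - 1) := by
    refine intervalIntegral.integral_congr fun t ht => ?_
    have ht0 : 0 ≤ t := (le_min hy zero_le_one).trans ht.1
    simp only [abs_of_nonneg ht0]
  rw [intervalIntegral.integral_comp_sub_left (fun t => s * |t| ^ (s - 1)) 1, sub_sub_cancel,
    sub_zero, habs, intervalIntegral.integral_const_mul, integral_rpow (Or.inl (by linarith)),
    sub_add_cancel, Real.one_rpow]
  field_simp

lemma lintegral_one_sub_rpow (hf : Measurable f) (hf0 : ∀ x, 0 ≤ f x) (hf1 : ∀ x, f x ≤ 1)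
    (hs : 1 ≤ s) :
    ∫⁻ x, ENNReal.ofReal (1 - f x ^ s) ∂μ
      = ∫⁻ t in Ioi 0, μ {x | f x < 1 - t} * ENNReal.ofReal (s * |1 - t| ^ (s - 1)) := by
  have hcont : Continuous fun t : ℝ => s * |1 - t| ^ (s - 1) :=
    continuous_const.mul (Continuous.rpow_const (by fun_prop) fun t => Or.inr (by linarith))
  have hcake := lintegral_comp_eq_lintegral_meas_lt_mul μ (f := fun x => 1 - f x)
    (g := fun t => s * |1 - t| ^ (s - 1)) (ae_of_all _ fun x => sub_nonneg.2 (hf1 x))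
    (by fun_prop) (fun t _ => hcont.intervalIntegrable 0 t)
    (ae_of_all _ fun t => mul_nonneg (by linarith) (by positivity))
  have hset : ∀ t : ℝ, {x | t < 1 - f x} = {x | f x < 1 - t} := fun t => by
    simp only [lt_sub_comm]
  simpa only [integral_mul_abs_one_sub_rpow hs (hf0 _), hset] using hcake

lemma ennreal_mul_add_mul_le_mul_add_mul {a b c d : ℝ≥0∞} (hab : a ≤ b) (hcd : c ≤ d) :
    b * c + d * a ≤ a * c + d * b := by
  obtain ⟨e, rfl⟩ := exists_add_of_le hab
  calc (a + e) * c + d * a = a * c + d * a + c * e := by ring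
    _ ≤ a * c + d * a + d * e := by gcongr
    _ = a * c + d * (a + e) := by ring

lemma exists_crossing_point {β : Type*} [LinearOrder β] {F G : ℝ → β} (h0 : F 0 ≤ G 0)
    (hcross : ∀ y < 1, F y ≤ G y → ∀ y' ∈ Ioc 0 y, F y' ≤ G y') :
    ∃ y₀, 0 ≤ y₀ ∧ ∀ y ∈ Ico 0 1, (y ≤ y₀ ∧ F y ≤ G y) ∨ (y₀ ≤ y ∧ G y ≤ F y) := by
  set S : Set ℝ := {y | y ∈ Ico 0 1 ∧ F y ≤ G y}
  have hS0 : (0 : ℝ) ∈ S := ⟨⟨le_rfl, one_pos⟩, h0⟩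
  have hbdd : BddAbove S := ⟨1, fun y hy => hy.1.2.le⟩
  refine ⟨sSup S, le_csSup hbdd hS0, fun y hy => ?_⟩
  by_cases hyS : F y ≤ G y
  · exact Or.inl ⟨le_csSup hbdd ⟨hy, hyS⟩, hyS⟩
  · refine Or.inr ⟨csSup_le ⟨0, hS0⟩ fun z hz => ?_, (not_le.1 hyS).le⟩
    by_contra! hyz
    rcases hy.1.eq_or_lt with rfl | hy0
    · exact hyS h0
    · exact hyS (hcross z hz.1.2 hz.2 y ⟨hy0, hyz.le⟩)

-- The weight `s y ^ (s - 1)` is `(s / 2) y ^ (s - 2)` times `2 y`, and the first factor passes its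
-- value at `y₀` exactly where `a` and `b` change order.
lemma weighted_rearrangement (hs : 2 ≤ s) {y y₀ : ℝ} (hy : 0 ≤ y) (hy₀ : 0 ≤ y₀) {a b : ℝ≥0∞}
    (hab : (y ≤ y₀ ∧ a ≤ b) ∨ (y₀ ≤ y ∧ b ≤ a)) :
    b * ENNReal.ofReal (s * |y| ^ (s - 1))
        + ENNReal.ofReal (s / 2 * y₀ ^ (s - 2)) * (a * ENNReal.ofReal (2 * |y| ^ ((2 : ℝ) - 1)))
      ≤ a * ENNReal.ofReal (s * |y| ^ (s - 1))
        + ENNReal.ofReal (s / 2 * y₀ ^ (s - 2))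
          * (b * ENNReal.ofReal (2 * |y| ^ ((2 : ℝ) - 1))) := by
  have hweight : ENNReal.ofReal (s * |y| ^ (s - 1)) = ENNReal.ofReal (s / 2 * y ^ (s - 2))
      * ENNReal.ofReal (2 * |y| ^ ((2 : ℝ) - 1)) := by
    rw [← ENNReal.ofReal_mul (by positivity), abs_of_nonneg hy,
      show s - 1 = s - 2 + (2 - 1) by ring,
      Real.rpow_add_of_nonneg hy (by linarith) (by norm_num)]
    ring_nf
  have hmono : ∀ {u v : ℝ}, 0 ≤ u → u ≤ v →
      ENNReal.ofReal (s / 2 * u ^ (s - 2)) ≤ ENNReal.ofReal (s / 2 * v ^ (s - 2)) :=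
    fun hu huv => ENNReal.ofReal_le_ofReal
      (mul_le_mul_of_nonneg_left (Real.rpow_le_rpow hu huv (by linarith)) (by linarith))
  rw [hweight]
  set c := ENNReal.ofReal (s / 2 * y₀ ^ (s - 2))
  set k := ENNReal.ofReal (s / 2 * y ^ (s - 2))
  set w := ENNReal.ofReal (2 * |y| ^ ((2 : ℝ) - 1))
  have hfactored : b * k + c * a ≤ a * k + c * b := by
    rcases hab with ⟨hyy, hle⟩ | ⟨hyy, hle⟩
    · exact ennreal_mul_add_mul_le_mul_add_mul hle (hmono hy hyy)
    · calc b * k + c * a = a * c + k * b := by ring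
        _ ≤ b * c + k * a := ennreal_mul_add_mul_le_mul_add_mul hle (hmono hy₀ hyy)
        _ = a * k + c * b := by ring
  calc b * (k * w) + c * (a * w) = (b * k + c * a) * w := by ring
    _ ≤ (a * k + c * b) * w := mul_le_mul_left hfactored w
    _ = a * (k * w) + c * (b * w) := by ring

lemma lintegral_one_sub_rpow_le_of_crossing (hf : Measurable f) (hf0 : ∀ x, 0 ≤ f x)
    (hf1 : ∀ x, f x ≤ 1) (hg : Measurable g) (hg0 : ∀ x, 0 ≤ g x) (hg1 : ∀ x, g x ≤ 1)
    (hcross : ∀ y < 1, μ {x | f x < y} ≤ μ {x | g x < y} →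
      ∀ y' ∈ Ioc 0 y, μ {x | f x < y'} ≤ μ {x | g x < y'})
    (hfin : ∫⁻ x, ENNReal.ofReal (1 - f x ^ (2 : ℝ)) ∂μ ≠ ∞)
    (hle : ∫⁻ x, ENNReal.ofReal (1 - g x ^ (2 : ℝ)) ∂μ
      ≤ ∫⁻ x, ENNReal.ofReal (1 - f x ^ (2 : ℝ)) ∂μ) (hs : 2 ≤ s) :
    ∫⁻ x, ENNReal.ofReal (1 - g x ^ s) ∂μ ≤ ∫⁻ x, ENNReal.ofReal (1 - f x ^ s) ∂μ := by
  have hempty : ∀ h : α → ℝ, (∀ x, 0 ≤ h x) → ∀ y ≤ 0, μ {x | h x < y} = 0 := fun h hh y hy => by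
    have : {x | h x < y} = ∅ := eq_empty_of_forall_notMem fun x hx => ((hh x).trans_lt hx).not_ge hy
    rw [this, measure_empty]
  obtain ⟨y₀, hy₀, hsplit⟩ := exists_crossing_point (F := fun y => μ {x | f x < y})
    (G := fun y => μ {x | g x < y}) (by simp [hempty f hf0, hempty g hg0]) hcross
  set c := ENNReal.ofReal (s / 2 * y₀ ^ (s - 2))
  have hpoint : ∀ t ∈ Ioi (0 : ℝ),
      μ {x | g x < 1 - t} * ENNReal.ofReal (s * |1 - t| ^ (s - 1))
          + c * (μ {x | f x < 1 - t} * ENNReal.ofReal (2 * |1 - t| ^ ((2 : ℝ) - 1)))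
        ≤ μ {x | f x < 1 - t} * ENNReal.ofReal (s * |1 - t| ^ (s - 1))
          + c * (μ {x | g x < 1 - t} * ENNReal.ofReal (2 * |1 - t| ^ ((2 : ℝ) - 1))) := by
    intro t ht
    rcases le_or_gt (1 - t) 0 with hy | hy
    · simp [hempty f hf0 _ hy, hempty g hg0 _ hy]
    · exact weighted_rearrangement hs hy.le hy₀ (hsplit (1 - t) ⟨hy.le, sub_lt_self 1 ht⟩)
  have hmeas : ∀ (h : α → ℝ) (r : ℝ),
      Measurable fun t : ℝ => μ {x | h x < 1 - t} * ENNReal.ofReal (r * |1 - t| ^ (r - 1)) :=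
    fun h r => Measurable.mul (Antitone.measurable fun t t' htt =>
      measure_mono fun x (hx : h x < 1 - t') => hx.trans_le (sub_le_sub_left htt 1)) (by fun_prop)
  have hinteg := setLIntegral_mono' (μ := volume) measurableSet_Ioi hpoint
  have hs1 : 1 ≤ s := by linarith
  rw [lintegral_add_left (hmeas g s), lintegral_add_left (hmeas f s),
    lintegral_const_mul _ (hmeas f 2), lintegral_const_mul _ (hmeas g 2),
    ← lintegral_one_sub_rpow hf hf0 hf1 hs1, ← lintegral_one_sub_rpow hg hg0 hg1 hs1,
    ← lintegral_one_sub_rpow hf hf0 hf1 one_le_two, ← lintegral_one_sub_rpow hg hg0 hg1 one_le_two]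
    at hinteg
  exact ENNReal.le_of_add_le_add_right (ENNReal.mul_ne_top ENNReal.ofReal_ne_top hfin)
    (hinteg.trans (by gcongr))

end LayerCake

section CosineLevelSets

variable {p x x' : ℝ}

lemma hasDerivAt_sub_rpow_neg_sub_add_rpow_neg {c r : ℝ} (h0 : 0 < c - r) (h1 : 0 < c + r)
    (q : ℝ) :
    HasDerivAt (fun r => (c - r) ^ (-q) - (c + r) ^ (-q))
      (q * ((c - r) ^ (-q - 1) + (c + r) ^ (-q - 1))) r := by
  have hleft := ((hasDerivAt_id r).const_sub c).rpow_const (p := -q) (Or.inl h0.ne')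
  have hright := ((hasDerivAt_id r).const_add c).rpow_const (p := -q) (Or.inl h1.ne')
  exact (hleft.sub hright).congr_deriv (by simp only [id]; ring)

lemma hasDerivAt_sub_rpow_neg_add_add_rpow_neg {c r : ℝ} (h0 : 0 < c - r) (h1 : 0 < c + r)
    (q : ℝ) :
    HasDerivAt (fun r => (c - r) ^ (-q) + (c + r) ^ (-q))
      (q * ((c - r) ^ (-q - 1) - (c + r) ^ (-q - 1))) r := by
  have hleft := ((hasDerivAt_id r).const_sub c).rpow_const (p := -q) (Or.inl h0.ne')
  have hright := ((hasDerivAt_id r).const_add c).rpow_const (p := -q) (Or.inl h1.ne')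
  exact (hleft.add hright).congr_deriv (by simp only [id]; ring)

lemma convexOn_sub_rpow_neg_sub_add_rpow_neg (hp0 : 0 < p) (c : ℝ) :
    ConvexOn ℝ (Ico 0 c) fun r => (c - r) ^ (-p) - (c + r) ^ (-p) := by
  have hpos : ∀ r ∈ Ico 0 c, 0 < c - r ∧ 0 < c + r := fun r hr =>
    ⟨by linarith [hr.2], by linarith [hr.1, hr.2]⟩
  refine convexOn_of_hasDerivWithinAt2_nonneg (convex_Ico 0 c)
    (f' := fun r => p * ((c - r) ^ (-p - 1) + (c + r) ^ (-p - 1)))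
    (f'' := fun r => p * ((p + 1) * ((c - r) ^ (-p - 2) - (c + r) ^ (-p - 2))))
    (fun r hr => (hasDerivAt_sub_rpow_neg_sub_add_rpow_neg (hpos r hr).1
      (hpos r hr).2 p).continuousAt.continuousWithinAt) (fun r hr => ?_) (fun r hr => ?_)
    fun r hr => ?_
  all_goals obtain ⟨h0, h1⟩ := hpos r (interior_subset hr)
  · exact (hasDerivAt_sub_rpow_neg_sub_add_rpow_neg h0 h1 p).hasDerivWithinAt
  · have h := (hasDerivAt_sub_rpow_neg_add_add_rpow_neg h0 h1 (p + 1)).const_mul p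
    ring_nf at h ⊢
    exact h.hasDerivWithinAt
  · have hmono : (c + r) ^ (-p - 2) ≤ (c - r) ^ (-p - 2) :=
      Real.rpow_le_rpow_of_nonpos h0 (by linarith [(interior_subset hr).1]) (by linarith)
    have := sub_nonneg.2 hmono
    positivity

lemma mul_sub_rpow_neg_sub_add_rpow_neg_le (hp0 : 0 < p) {c r r' : ℝ} (hr : 0 ≤ r)
    (hrr' : r ≤ r') (hr' : r' < c) :
    r' * ((c - r) ^ (-p) - (c + r) ^ (-p)) ≤ r * ((c - r') ^ (-p) - (c + r') ^ (-p)) := by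
  rcases hr.eq_or_lt with rfl | hr0
  · simp
  have hr'0 := hr0.trans_le hrr'
  have h := (convexOn_sub_rpow_neg_sub_add_rpow_neg hp0 c).2
    ⟨le_rfl, hr'0.trans hr'⟩ ⟨hr'0.le, hr'⟩
    (sub_nonneg.2 ((div_le_one hr'0).2 hrr')) (by positivity : 0 ≤ r / r') (sub_add_cancel _ _)
  simp only [smul_eq_mul, mul_zero, zero_add, sub_zero, add_zero, sub_self,
    div_mul_cancel₀ r hr'0.ne', div_mul_eq_mul_div] at h
  rwa [le_div_iff₀' hr'0] at h

lemma abs_cos_lt_cos_iff (hx0 : 0 ≤ x) (hx : x ≤ Real.pi / 2) {u : ℝ} :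
    |Real.cos u| < Real.cos x ↔
      ∃ k : ℤ, u ∈ Ioo (k * Real.pi + x) ((k + 1) * Real.pi - x) := by
  have hbase : ∀ v ∈ Icc 0 Real.pi, |Real.cos v| < Real.cos x ↔ v ∈ Ioo x (Real.pi - x) := by
    intro v hv
    have hxI : x ∈ Icc 0 Real.pi := ⟨hx0, by linarith [Real.pi_pos]⟩
    have hxI' : Real.pi - x ∈ Icc 0 Real.pi := ⟨by linarith [hxI.2], by linarith⟩
    rw [abs_lt, ← Real.cos_pi_sub, Real.strictAntiOn_cos.lt_iff_gt hxI' hv,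
      Real.strictAntiOn_cos.lt_iff_gt hv hxI, mem_Ioo, and_comm]
  have habs : ∀ k : ℤ, |Real.cos (u - k * Real.pi)| = |Real.cos u| := fun k => by
    rw [Real.cos_sub_int_mul_pi, abs_mul, abs_zpow, abs_neg, abs_one, one_zpow, one_mul]
  constructor
  · intro h
    refine ⟨⌊u / Real.pi⌋, ?_⟩
    have hlow : ⌊u / Real.pi⌋ * Real.pi ≤ u := (le_div_iff₀ Real.pi_pos).1 (Int.floor_le _)
    have hupp : u < (⌊u / Real.pi⌋ + 1) * Real.pi :=
      (div_lt_iff₀ Real.pi_pos).1 (Int.lt_floor_add_one _)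
    rw [← habs ⌊u / Real.pi⌋, hbase _ ⟨by linarith, by linarith⟩] at h
    exact ⟨by linarith [h.1], by linarith [h.2]⟩
  · rintro ⟨k, hk⟩
    rw [← habs k, hbase _ ⟨by linarith [hk.1], by linarith [hk.2]⟩]
    exact ⟨by linarith [hk.1], by linarith [hk.2]⟩

lemma setOf_abs_cos_lt_cos_ae_eq (hx0 : 0 ≤ x) (hx : x ≤ Real.pi / 2) :
    {u | |Real.cos u| < Real.cos x} =ᵐ[stableMeasure p]
      ⋃ k : ℕ, Ioo (k * Real.pi + x) ((k + 1) * Real.pi - x) := by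
  filter_upwards [ae_pos_stableMeasure] with u hu
  refine propext ((abs_cos_lt_cos_iff hx0 hx).trans (Iff.trans ?_ mem_iUnion.symm))
  refine ⟨fun ⟨k, hk⟩ => ?_, fun ⟨k, hk⟩ => ⟨k, mod_cast hk⟩⟩
  have hk0 : 0 ≤ k := by
    by_contra! hneg
    have : (k : ℝ) + 1 ≤ 0 := mod_cast hneg
    nlinarith [hk.2, Real.pi_pos]
  lift k to ℕ using hk0
  exact ⟨k, mod_cast hk⟩

lemma stableMeasure_abs_cos_lt_cos_ne_top (hp0 : 0 < p) (hx0 : 0 < x) (hx : x ≤ Real.pi / 2) :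
    stableMeasure p {u | |Real.cos u| < Real.cos x} ≠ ∞ := by
  have hsub : (⋃ k : ℕ, Ioo (k * Real.pi + x) ((k + 1) * Real.pi - x)) ⊆ Ioi x :=
    iUnion_subset fun k u hu => lt_of_le_of_lt (le_add_of_nonneg_left (by positivity)) hu.1
  rw [measure_congr (setOf_abs_cos_lt_cos_ae_eq hx0.le hx)]
  exact ((measure_mono hsub).trans_lt (by simp [stableMeasure_Ioi hp0 hx0])).ne

lemma hasSum_stableMeasure_abs_cos_lt_cos (hp0 : 0 < p) (hx0 : 0 < x) (hx : x < Real.pi / 2) :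
    HasSum (fun k : ℕ => (k * Real.pi + x) ^ (-p) - ((k + 1) * Real.pi - x) ^ (-p))
      (p * (stableMeasure p).real {u | |Real.cos u| < Real.cos x}) := by
  have hle : ∀ k : ℕ, (k : ℝ) * Real.pi + x ≤ (k + 1) * Real.pi - x := fun k => by linarith
  have hpos : ∀ k : ℕ, 0 < (k : ℝ) * Real.pi + x := fun k => by positivity
  have hdisj : Pairwise (Function.onFun Disjoint
      fun k : ℕ => Ioo (k * Real.pi + x) ((k + 1) * Real.pi - x)) := by
    refine (pairwise_disjoint_on _).2 fun k l hkl => ?_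
    have hkl' : (k : ℝ) + 1 ≤ l := mod_cast hkl
    refine disjoint_left.2 fun u hu hu' => ?_
    nlinarith [hu.2, hu'.1, Real.pi_pos]
  have hreal : ∀ k : ℕ, p * (stableMeasure p (Ioo (k * Real.pi + x) ((k + 1) * Real.pi - x))).toReal
      = (k * Real.pi + x) ^ (-p) - ((k + 1) * Real.pi - x) ^ (-p) := fun k => by
    rw [measure_congr Ioo_ae_eq_Ioc, stableMeasure_Ioc hp0 (hpos k) (hle k),
      ENNReal.toReal_ofReal, mul_div_cancel₀ _ hp0.ne']
    exact div_nonneg (sub_nonneg.2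
      (Real.rpow_le_rpow_of_nonpos (hpos k) (hle k) (by linarith))) hp0.le
  have hmeas := measure_congr (setOf_abs_cos_lt_cos_ae_eq (p := p) hx0.le hx.le)
  have hfin := stableMeasure_abs_cos_lt_cos_ne_top hp0 hx0 hx.le
  rw [measure_iUnion hdisj fun _ => measurableSet_Ioo] at hmeas
  rw [hmeas] at hfin
  rw [measureReal_def, hmeas, ENNReal.tsum_toReal_eq (ENNReal.ne_top_of_tsum_ne_top hfin)]
  simpa only [hreal] using (ENNReal.hasSum_toReal hfin).mul_left p

lemma antitone_stableMeasure_abs_cos_lt_cos_div (hp0 : 0 < p) (hx0 : 0 < x) (hxx' : x ≤ x')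
    (hx' : x' < Real.pi / 2) :
    (Real.pi / 2 - x) * (p * (stableMeasure p).real {u | |Real.cos u| < Real.cos x'}) ≤
      (Real.pi / 2 - x') * (p * (stableMeasure p).real {u | |Real.cos u| < Real.cos x}) := by
  refine hasSum_le (fun k => ?_)
    ((hasSum_stableMeasure_abs_cos_lt_cos hp0 (hx0.trans_le hxx') hx').mul_left _)
    ((hasSum_stableMeasure_abs_cos_lt_cos hp0 hx0 (hxx'.trans_lt hx')).mul_left _)
  have hk : (0 : ℝ) ≤ k * Real.pi := by positivity
  have h := mul_sub_rpow_neg_sub_add_rpow_neg_le hp0 (c := k * Real.pi + Real.pi / 2)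
    (sub_nonneg.2 hx'.le) (sub_le_sub_left hxx' _) (by linarith)
  ring_nf at h ⊢
  exact h

lemma hasSum_rpow_neg_sub_stableMeasure_abs_cos_lt_cos (hp0 : 0 < p) (hx0 : 0 < x)
    (hx : x < Real.pi / 2) :
    HasSum (fun k : ℕ => ((k + 1) * Real.pi - x) ^ (-p) - ((k + 1) * Real.pi + x) ^ (-p))
      (x ^ (-p) - p * (stableMeasure p).real {u | |Real.cos u| < Real.cos x}) := by
  have hanti : Antitone fun k : ℕ => ((k : ℝ) * Real.pi + x) ^ (-p) := fun k l hkl =>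
    Real.rpow_le_rpow_of_nonpos (by positivity) (by gcongr) (by linarith)
  have hlim : Filter.Tendsto (fun k : ℕ => ((k : ℝ) * Real.pi + x) ^ (-p)) Filter.atTop
      (nhds 0) :=
    (tendsto_rpow_neg_atTop hp0).comp (Filter.tendsto_atTop_add_const_right _ x
      (tendsto_natCast_atTop_atTop.atTop_mul_const Real.pi_pos))
  have htele : HasSum (fun k : ℕ => ((k : ℝ) * Real.pi + x) ^ (-p)
      - (((k + 1 : ℕ) : ℝ) * Real.pi + x) ^ (-p)) (x ^ (-p)) := by
    rw [hasSum_iff_tendsto_nat_of_nonneg fun k => sub_nonneg.2 (hanti k.le_succ)]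
    simp only [Finset.sum_range_sub' (fun k : ℕ => ((k : ℝ) * Real.pi + x) ^ (-p))]
    simpa using hlim.const_sub (x ^ (-p))
  simpa only [sub_sub_sub_cancel_left, Nat.cast_add_one] using
    htele.sub (hasSum_stableMeasure_abs_cos_lt_cos hp0 hx0 hx)

lemma monotone_rpow_neg_sub_stableMeasure_abs_cos_lt_cos_div (hp0 : 0 < p) (hx0 : 0 < x)
    (hxx' : x ≤ x') (hx' : x' < Real.pi / 2) :
    x' * (x ^ (-p) - p * (stableMeasure p).real {u | |Real.cos u| < Real.cos x}) ≤
      x * (x' ^ (-p) - p * (stableMeasure p).real {u | |Real.cos u| < Real.cos x'}) := by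
  refine hasSum_le (fun k => ?_)
    ((hasSum_rpow_neg_sub_stableMeasure_abs_cos_lt_cos hp0 hx0 (hxx'.trans_lt hx')).mul_left _)
    ((hasSum_rpow_neg_sub_stableMeasure_abs_cos_lt_cos hp0 (hx0.trans_le hxx') hx').mul_left _)
  exact mul_sub_rpow_neg_sub_add_rpow_neg_le hp0 hx0.le hxx'
    (by nlinarith [Real.pi_pos, (Nat.cast_nonneg k : (0 : ℝ) ≤ k)])

end CosineLevelSets

/-- The exponent `L` with `cos x = exp (-(L / 2))`, so that `exp (-(u ^ 2 / 2)) < cos x` exactly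
when `gaussianLevel x < u ^ 2`. -/
noncomputable def gaussianLevel (x : ℝ) : ℝ := -2 * Real.log (Real.cos x)

section GaussianLevel

variable {x x' : ℝ}

lemma cos_pos_of_nonneg_of_lt_pi_div_two (hx0 : 0 ≤ x) (hx : x < Real.pi / 2) : 0 < Real.cos x :=
  Real.cos_pos_of_mem_Ioo ⟨by linarith [Real.pi_pos], hx⟩

lemma hasDerivAt_gaussianLevel (hx : Real.cos x ≠ 0) :
    HasDerivAt gaussianLevel (2 * Real.tan x) x :=
  (((Real.hasDerivAt_cos x).log hx).const_mul (-2)).congr_deriv (by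
    rw [Real.tan_eq_sin_div_cos]; ring)

lemma gaussianLevel_pos (hx0 : 0 < x) (hx : x < Real.pi / 2) : 0 < gaussianLevel x := by
  have hlog : Real.log (Real.cos x) < 0 :=
    Real.log_neg (cos_pos_of_nonneg_of_lt_pi_div_two hx0.le hx)
      (Real.cos_zero ▸ Real.cos_lt_cos_of_nonneg_of_le_pi_div_two le_rfl hx.le hx0)
  unfold gaussianLevel
  linarith

lemma gaussianLevel_le_gaussianLevel (hx0 : 0 ≤ x) (hxx' : x ≤ x') (hx' : x' < Real.pi / 2) :
    gaussianLevel x ≤ gaussianLevel x' := by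
  have hlog : Real.log (Real.cos x') ≤ Real.log (Real.cos x) :=
    Real.log_le_log (cos_pos_of_nonneg_of_lt_pi_div_two (hx0.trans hxx') hx')
      (Real.cos_le_cos_of_nonneg_of_le_pi hx0 (by linarith [Real.pi_pos]) hxx')
  unfold gaussianLevel
  linarith

lemma exp_gaussianLevel (hx : 0 < Real.cos x) :
    Real.exp (gaussianLevel x) = 1 + Real.tan x ^ 2 := by
  rw [gaussianLevel, mul_comm, Real.exp_mul, Real.exp_log hx, Real.rpow_neg hx.le,
    Real.rpow_two, ← Real.inv_one_add_tan_sq hx.ne', inv_inv]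

lemma mul_cube_le_mul_exp_sub_one {f : ℝ} (hf0 : 0 ≤ f) (hf2 : f ≤ 2) :
    f * (60 + 10 * f + f ^ 2) ^ 3 ≤ 60 * (60 - f ^ 2) ^ 2 * (Real.exp f - 1) := by
  have htaylor : f + f ^ 2 / 2 + f ^ 3 / 6 + f ^ 4 / 24 + f ^ 5 / 120 + f ^ 6 / 720
      ≤ Real.exp f - 1 := by
    have h := Real.sum_le_exp_of_nonneg hf0 7
    simp only [Finset.sum_range_succ, Finset.sum_range_zero, Nat.factorial] at h
    norm_num at h
    linarith
  refine le_trans ?_ (mul_le_mul_of_nonneg_left htaylor (by positivity))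
  have h3 : f ^ 3 ≤ 2 ^ 3 := pow_le_pow_left₀ hf0 hf2 3
  have h4 : f ^ 4 ≤ 2 ^ 4 := pow_le_pow_left₀ hf0 hf2 4
  have hfac : 0 ≤ f ^ 4 * (800 + 180 * f - 51 * f ^ 3 - 15 / 2 * f ^ 4 + f ^ 5 / 2 + f ^ 6 / 12) :=
    mul_nonneg (by positivity) (by linarith [pow_nonneg hf0 5, pow_nonneg hf0 6])
  linarith

lemma hasDerivAt_sqrt_sixty_mul_div {f : ℝ} (hf : 0 < f) :
    HasDerivAt (fun f => √(60 * f / (60 + 10 * f + f ^ 2)))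
      (30 * (60 - f ^ 2) / ((60 + 10 * f + f ^ 2) ^ 2 * √(60 * f / (60 + 10 * f + f ^ 2)))) f := by
  have hid := hasDerivAt_id f
  have hden : HasDerivAt (fun f : ℝ => 60 + 10 * f + f ^ 2) (10 + 2 * f) f :=
    (((hid.const_mul 10).const_add 60).add (hid.pow 2)).congr_deriv (by simp)
  have hdiv : HasDerivAt (fun f => 60 * f / (60 + 10 * f + f ^ 2))
      (60 * (60 - f ^ 2) / (60 + 10 * f + f ^ 2) ^ 2) f :=
    ((hid.const_mul 60).div hden (by positivity)).congr_deriv (by simp only [id]; ring)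
  refine (hdiv.sqrt (by positivity)).congr_deriv ?_
  rw [div_div, div_eq_div_iff (by positivity) (by positivity)]
  ring

lemma sq_mul_sqrt_le {f t : ℝ} (hf0 : 0 ≤ f) (hf2 : f ≤ 2) (ht0 : 0 ≤ t)
    (ht : t ^ 2 = Real.exp f - 1) :
    (60 + 10 * f + f ^ 2) ^ 2 * √(60 * f / (60 + 10 * f + f ^ 2)) ≤ 60 * (60 - f ^ 2) * t := by
  have hf60 : 0 ≤ 60 - f ^ 2 := by nlinarith
  refine (sq_le_sq₀ (by positivity) (by positivity)).1 ?_
  rw [mul_pow, mul_pow, Real.sq_sqrt (by positivity), ht]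
  have h := mul_cube_le_mul_exp_sub_one hf0 hf2
  calc ((60 + 10 * f + f ^ 2) ^ 2) ^ 2 * (60 * f / (60 + 10 * f + f ^ 2))
      = 60 * (f * (60 + 10 * f + f ^ 2) ^ 3) := by field_simp
    _ ≤ 60 * (60 * (60 - f ^ 2) ^ 2 * (Real.exp f - 1)) := by gcongr
    _ = (60 * (60 - f ^ 2)) ^ 2 * (Real.exp f - 1) := by ring

lemma le_sqrt_gaussianLevel (hx0 : 0 ≤ x) (hx : x < Real.pi / 2) (hf2 : gaussianLevel x ≤ 2) :
    x ≤ √(60 * gaussianLevel x / (60 + 10 * gaussianLevel x + gaussianLevel x ^ 2)) := by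
  have hcos : ∀ y ∈ Icc 0 x, Real.cos y ≠ 0 := fun y hy =>
    (cos_pos_of_nonneg_of_lt_pi_div_two hy.1 (hy.2.trans_lt hx)).ne'
  have hcont : ContinuousOn gaussianLevel (Icc 0 x) := fun y hy =>
    (hasDerivAt_gaussianLevel (hcos y hy)).continuousAt.continuousWithinAt
  have hnonneg : ∀ y ∈ Icc 0 x, 0 ≤ gaussianLevel y := fun y hy => by
    simpa [gaussianLevel] using gaussianLevel_le_gaussianLevel le_rfl hy.1 (hy.2.trans_lt hx)
  have hmono : MonotoneOn (fun y => √(60 * gaussianLevel y /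
      (60 + 10 * gaussianLevel y + gaussianLevel y ^ 2)) - y) (Icc 0 x) := by
    refine monotoneOn_of_hasDerivWithinAt_nonneg (convex_Icc 0 x)
      (f' := fun y => 30 * (60 - gaussianLevel y ^ 2) / ((60 + 10 * gaussianLevel y +
        gaussianLevel y ^ 2) ^ 2 * √(60 * gaussianLevel y / (60 + 10 * gaussianLevel y +
        gaussianLevel y ^ 2))) * (2 * Real.tan y) - 1) ?_ (fun y hy => ?_) fun y hy => ?_
    · refine ((hcont.const_mul 60).div (by fun_prop) fun y hy => ?_).sqrt.sub continuousOn_id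
      have := hnonneg y hy
      positivity
    all_goals
      rw [interior_Icc] at hy
      have hf0 := gaussianLevel_pos hy.1 (hy.2.trans hx)
    · exact (((hasDerivAt_sqrt_sixty_mul_div hf0).comp y (hasDerivAt_gaussianLevel
        (hcos y (Ioo_subset_Icc_self hy)))).sub (hasDerivAt_id y)).hasDerivWithinAt
    · have htan : 0 ≤ Real.tan y :=
        Real.tan_nonneg_of_nonneg_of_le_pi_div_two hy.1.le (hy.2.trans hx).le
      have hle := sq_mul_sqrt_le hf0.le
        ((gaussianLevel_le_gaussianLevel hy.1.le hy.2.le hx).trans hf2) htan (by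
          rw [exp_gaussianLevel (cos_pos_of_nonneg_of_lt_pi_div_two hy.1.le (hy.2.trans hx)),
            add_sub_cancel_left])
      rw [sub_nonneg, div_mul_eq_mul_div, one_le_div (by positivity)]
      linarith
  simpa [gaussianLevel] using hmono ⟨le_rfl, hx0⟩ ⟨hx0, le_rfl⟩ hx0

lemma exp_sub_one_mul_le {f u : ℝ} (hf0 : 0 ≤ f) (hf2 : f ≤ 2) (hu : u = f * (10 + f) / 60) :
    (Real.exp f - 1) * (8 + u) ^ 2 ≤ f * (1 + u) * (8 + 12 * u) ^ 2 := by
  obtain ⟨h, rfl⟩ : ∃ h, f = 2 * h := ⟨f / 2, by ring⟩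
  have hh0 : 0 ≤ h := by linarith
  have hh1 : h ≤ 1 := by linarith
  have htaylor : Real.exp h ≤ 1 + h + h ^ 2 / 2 + h ^ 3 / 6 + 5 * h ^ 4 / 96 := by
    have := Real.exp_bound' hh0 hh1 (n := 4) (by norm_num)
    simp only [Finset.sum_range_succ, Finset.sum_range_zero, Nat.factorial] at this
    norm_num at this
    linarith
  have hexp : Real.exp (2 * h) ≤ (1 + h + h ^ 2 / 2 + h ^ 3 / 6 + 5 * h ^ 4 / 96) ^ 2 := by
    rw [mul_comm, Real.exp_mul, Real.rpow_two]
    exact pow_le_pow_left₀ (Real.exp_pos h).le htaylor 2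
  refine (mul_le_mul_of_nonneg_right (sub_le_sub_right hexp 1) (by positivity)).trans ?_
  have hpow : ∀ k l : ℕ, k ≤ l → h ^ l ≤ h ^ k := fun k l hkl =>
    pow_le_pow_of_le_one hh0 hh1 hkl
  rw [hu]
  linarith [hpow 3 4 (by simp), hpow 2 4 (by simp), hpow 2 5 (by simp), hpow 2 6 (by simp),
    hpow 2 7 (by simp), hpow 2 8 (by simp), hpow 2 9 (by simp), hpow 2 10 (by simp),
    hpow 2 11 (by simp), hpow 2 12 (by simp), pow_nonneg hh0 2]

end GaussianLevel

section SingleCrossing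

variable {p x x' : ℝ}

lemma one_add_div_le_one_add_rpow {t r : ℝ} (ht : 0 ≤ t) (hr0 : 0 ≤ r) (hr1 : r ≤ 1) :
    (1 + t) / (1 + (1 - r) * t) ≤ (1 + t) ^ r := by
  have hbern : (1 + t) ^ (1 - r) ≤ 1 + (1 - r) * t :=
    rpow_one_add_le_one_add_mul_self (by linarith) (by linarith) (by linarith)
  rw [div_le_iff₀ ((Real.rpow_pos_of_pos (by linarith) _).trans_le hbern)]
  calc 1 + t = (1 + t) ^ r * (1 + t) ^ (1 - r) := by
        rw [← Real.rpow_add (by linarith), add_sub_cancel, Real.rpow_one]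
    _ ≤ _ := by gcongr

lemma mul_tan_mul_le (hx0 : 0 < x) (hx : x < Real.pi / 2) (hf2 : gaussianLevel x ≤ 2) {t : ℝ}
    (ht : gaussianLevel x = (1 + t) * x ^ 2) :
    0 ≤ t ∧ x * Real.tan x * (8 + t) ≤ gaussianLevel x * (8 + 12 * t) := by
  set f := gaussianLevel x with hf
  have hf0 : 0 < f := gaussianLevel_pos hx0 hx
  obtain ⟨u, hu⟩ : ∃ u, u = f * (10 + f) / 60 := ⟨_, rfl⟩
  have hu0 : 0 ≤ u := hu ▸ by positivity
  have hut : u ≤ t := by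
    have h := (Real.le_sqrt' hx0).1 (le_sqrt_gaussianLevel hx0.le hx hf2)
    rw [le_div_iff₀ (by positivity), ← hf] at h
    have : x ^ 2 * (1 + u) ≤ x ^ 2 * (1 + t) := by rw [hu]; linarith
    linarith [le_of_mul_le_mul_left this (by positivity)]
  have ht0 := hu0.trans hut
  refine ⟨ht0, (sq_le_sq₀ ?_ (by positivity)).1 ?_⟩
  · have := Real.tan_nonneg_of_nonneg_of_le_pi_div_two hx0.le hx.le
    positivity
  have htan : Real.tan x ^ 2 = Real.exp f - 1 := by
    rw [exp_gaussianLevel (cos_pos_of_nonneg_of_lt_pi_div_two hx0.le hx), add_sub_cancel_left]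
  have hexp : (Real.exp f - 1) * (8 + t) ^ 2 ≤ f * (1 + t) * (8 + 12 * t) ^ 2 := by
    refine le_of_mul_le_mul_right ?_ (by positivity : 0 < (8 + u) ^ 2)
    calc (Real.exp f - 1) * (8 + t) ^ 2 * (8 + u) ^ 2
        = (Real.exp f - 1) * (8 + u) ^ 2 * (8 + t) ^ 2 := by ring
      _ ≤ f * (1 + u) * (8 + 12 * u) ^ 2 * (8 + t) ^ 2 := by
          gcongr ?_ * _; exact exp_sub_one_mul_le hf0.le hf2 hu
      _ = f * (1 + u) * ((8 + 12 * u) * (8 + t)) ^ 2 := by ring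
      _ ≤ f * (1 + t) * ((8 + 12 * t) * (8 + u)) ^ 2 := by gcongr ?_ * ?_ ^ 2 <;> nlinarith
      _ = _ := by ring
  calc (x * Real.tan x * (8 + t)) ^ 2
      = x ^ 2 * ((Real.exp f - 1) * (8 + t) ^ 2) := by rw [mul_pow, mul_pow, htan]; ring
    _ ≤ x ^ 2 * (f * (1 + t) * (8 + 12 * t) ^ 2) := by gcongr
    _ = f * ((1 + t) * x ^ 2) * (8 + 12 * t) ^ 2 := by ring
    _ = (f * (8 + 12 * t)) ^ 2 := by rw [← ht]; ring

lemma one_add_mul_tan_div_le (hp : 7 / 4 ≤ p) (hp2 : p < 2) (hx0 : 0 < x)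
    (hx : x < Real.pi / 2) (hf2 : gaussianLevel x ≤ 2) :
    1 + p * (x * Real.tan x / gaussianLevel x) ≤
      (p + 1) * (gaussianLevel x / x ^ 2) ^ (p / 2) := by
  have hf0 := gaussianLevel_pos hx0 hx
  obtain ⟨t, ht⟩ : ∃ t, gaussianLevel x / x ^ 2 = 1 + t := ⟨_, (add_sub_cancel 1 _).symm⟩
  obtain ⟨ht0, hle⟩ := mul_tan_mul_le hx0 hx hf2 ((div_eq_iff (by positivity)).1 ht)
  have hden : 0 < 1 + (1 - p / 2) * t := by nlinarith
  rw [ht]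
  calc 1 + p * (x * Real.tan x / gaussianLevel x)
      ≤ 1 + p * ((8 + 12 * t) / (8 + t)) := by
        have hratio := (div_le_div_iff₀ hf0 (by positivity : 0 < 8 + t)).2
          (hle.trans_eq (mul_comm _ _))
        gcongr
    _ ≤ (p + 1) * ((1 + t) / (1 + (1 - p / 2) * t)) := by
        rw [← mul_div_assoc, ← mul_div_assoc, one_add_div (by positivity),
          div_le_div_iff₀ (by positivity) hden]
        have h8 : 0 ≤ 8 * p - 14 := by linarith
        have h12 : 0 ≤ 12 * p - 21 := by linarith
        have hdiff : 0 ≤ p * t / 2 * ((8 * p - 14) + (12 * p - 21) * t) := by positivity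
        linarith
    _ ≤ _ := by
        gcongr
        exact one_add_div_le_one_add_rpow ht0 (by linarith) (by linarith)

lemma mul_rpow_neg_sub_gaussianLevel_le (hp : 7 / 4 ≤ p) (hp2 : p < 2) (hx0 : 0 < x)
    (hxx' : x ≤ x') (hx' : x' < Real.pi / 2) (hf2 : gaussianLevel x' ≤ 2) :
    x * (x' ^ (-p) - gaussianLevel x' ^ (-(p / 2))) ≤
      x' * (x ^ (-p) - gaussianLevel x ^ (-(p / 2))) := by
  have hderiv : ∀ y ∈ Icc x x', HasDerivAt (fun y => (y ^ (-p) - gaussianLevel y ^ (-(p / 2))) / y)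
      (gaussianLevel y ^ (-(p / 2)) * (1 + p * (y * Real.tan y / gaussianLevel y)
        - (p + 1) * (gaussianLevel y / y ^ 2) ^ (p / 2)) / y ^ 2) y := by
    intro y hy
    have hy0 := hx0.trans_le hy.1
    have hyx := hy.2.trans_lt hx'
    have hf0 := gaussianLevel_pos hy0 hyx
    have hf := hasDerivAt_gaussianLevel (cos_pos_of_nonneg_of_lt_pi_div_two hy0.le hyx).ne'
    have hpow : gaussianLevel y ^ (-(p / 2)) * (gaussianLevel y / y ^ 2) ^ (p / 2) = y ^ (-p) := by
      rw [Real.div_rpow hf0.le (by positivity), Real.rpow_neg hf0.le, ← Real.rpow_natCast,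
        ← Real.rpow_mul hy0.le, Real.rpow_neg hy0.le, Nat.cast_two, mul_div_cancel₀ p two_ne_zero]
      field_simp
    refine ((((hasDerivAt_id y).rpow_const (Or.inl hy0.ne')).sub
      (hf.rpow_const (Or.inl hf0.ne'))).div (hasDerivAt_id y) hy0.ne').congr_deriv ?_
    simp only [id, Pi.sub_apply]
    rw [Real.rpow_sub_one hy0.ne', Real.rpow_sub_one hf0.ne', ← hpow]
    field_simp
    ring
  have hanti := antitoneOn_of_hasDerivWithinAt_nonpos (convex_Icc x x')
    (fun y hy => (hderiv y hy).continuousAt.continuousWithinAt)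
    (fun y hy => (hderiv y (interior_subset hy)).hasDerivWithinAt) fun y hy => by
      obtain ⟨hxy, hyx'⟩ := interior_subset hy
      have hy0 := hx0.trans_le hxy
      have hyx := hyx'.trans_lt hx'
      have hf0 := gaussianLevel_pos hy0 hyx
      have hle := one_add_mul_tan_div_le hp hp2 hy0 hyx
        ((gaussianLevel_le_gaussianLevel hy0.le hyx' hx').trans hf2)
      exact div_nonpos_of_nonpos_of_nonneg (mul_nonpos_of_nonneg_of_nonpos
        (Real.rpow_nonneg hf0.le _) (by linarith)) (by positivity)
  have h := hanti ⟨le_rfl, hxx'⟩ ⟨hxx', le_rfl⟩ hxx'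
  rw [div_le_div_iff₀ (hx0.trans_le hxx') hx0] at h
  linarith

lemma gaussianLevel_rpow_mul_le (hp0 : 0 < p) (hx0 : 0 < x) (hxx' : x ≤ x')
    (hx' : x' < Real.pi / 2) (hf : p ≤ gaussianLevel x) :
    gaussianLevel x' ^ (p / 2) * (Real.pi / 2 - x') ≤
      gaussianLevel x ^ (p / 2) * (Real.pi / 2 - x) := by
  have hpos : ∀ y ∈ Icc x x', 0 < gaussianLevel y := fun y hy =>
    gaussianLevel_pos (hx0.trans_le hy.1) (hy.2.trans_lt hx')
  have hderiv : ∀ y ∈ Icc x x', HasDerivAt (fun y => gaussianLevel y ^ (p / 2) * (Real.pi / 2 - y))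
      (gaussianLevel y ^ (p / 2 - 1) * (p * (Real.tan y * (Real.pi / 2 - y)) - gaussianLevel y))
      y := by
    intro y hy
    have hf := hasDerivAt_gaussianLevel (cos_pos_of_nonneg_of_lt_pi_div_two
      (hx0.le.trans hy.1) (hy.2.trans_lt hx')).ne'
    refine ((hf.rpow_const (Or.inl (hpos y hy).ne')).mul
      ((hasDerivAt_id y).const_sub (Real.pi / 2))).congr_deriv ?_
    rw [Real.rpow_sub_one (hpos y hy).ne']
    have := (hpos y hy).ne'
    simp only [id]
    field_simp
    ring
  refine antitoneOn_of_hasDerivWithinAt_nonpos (convex_Icc x x')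
    (fun y hy => (hderiv y hy).continuousAt.continuousWithinAt)
    (fun y hy => (hderiv y (interior_subset hy)).hasDerivWithinAt) (fun y hy => ?_)
    ⟨le_rfl, hxx'⟩ ⟨hxx', le_rfl⟩ hxx'
  obtain ⟨hxy, hyx'⟩ := interior_subset hy
  have htan : 0 < Real.tan y :=
    Real.tan_pos_of_pos_of_lt_pi_div_two (hx0.trans_le hxy) (hyx'.trans_lt hx')
  have hcot : Real.tan y * (Real.pi / 2 - y) ≤ 1 := by
    have h := Real.lt_tan (sub_pos.2 (hyx'.trans_lt hx')) (by linarith)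
    rw [Real.tan_pi_div_two_sub] at h
    calc Real.tan y * (Real.pi / 2 - y) ≤ Real.tan y * (Real.tan y)⁻¹ := by gcongr
      _ = 1 := mul_inv_cancel₀ htan.ne'
  refine mul_nonpos_of_nonneg_of_nonpos (Real.rpow_nonneg (hpos y ⟨hxy, hyx'⟩).le _) ?_
  nlinarith [gaussianLevel_le_gaussianLevel hx0.le hxy (hyx'.trans_lt hx')]

end SingleCrossing

section CosineVersusGaussian

variable {p : ℝ}

lemma mul_stableMeasure_abs_cos_lt_cos_le_of_gaussianLevel_le (hp : 7 / 4 ≤ p) (hp2 : p < 2)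
    {x x' : ℝ} (hx0 : 0 < x) (hxx' : x ≤ x') (hx' : x' < Real.pi / 2) (hf : gaussianLevel x' ≤ p)
    (hle : p * (stableMeasure p).real {u | |Real.cos u| < Real.cos x}
      ≤ gaussianLevel x ^ (-(p / 2))) :
    p * (stableMeasure p).real {u | |Real.cos u| < Real.cos x'}
      ≤ gaussianLevel x' ^ (-(p / 2)) := by
  have hmono := monotone_rpow_neg_sub_stableMeasure_abs_cos_lt_cos_div
    (by linarith : 0 < p) hx0 hxx' hx'
  have hanti := mul_rpow_neg_sub_gaussianLevel_le hp hp2 hx0 hxx' hx' (by linarith)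
  refine sub_nonneg.1 (nonneg_of_mul_nonneg_right ?_ hx0)
  nlinarith [mul_nonneg (hx0.trans_le hxx').le (sub_nonneg.2 hle)]

lemma mul_stableMeasure_abs_cos_lt_cos_le_of_le_gaussianLevel (hp0 : 0 < p)
    {x x' : ℝ} (hx0 : 0 < x) (hxx' : x ≤ x') (hx' : x' < Real.pi / 2) (hf : p ≤ gaussianLevel x)
    (hle : p * (stableMeasure p).real {u | |Real.cos u| < Real.cos x}
      ≤ gaussianLevel x ^ (-(p / 2))) :
    p * (stableMeasure p).real {u | |Real.cos u| < Real.cos x'}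
      ≤ gaussianLevel x' ^ (-(p / 2)) := by
  have hf0 : 0 < gaussianLevel x := hp0.trans_le hf
  have hf0' : 0 < gaussianLevel x' := gaussianLevel_pos (hx0.trans_le hxx') hx'
  have hG := antitone_stableMeasure_abs_cos_lt_cos_div hp0 hx0 hxx' hx'
  have hfδ := gaussianLevel_rpow_mul_le hp0 hx0 hxx' hx' hf
  set G := p * (stableMeasure p).real {u | |Real.cos u| < Real.cos x}
  set G' := p * (stableMeasure p).real {u | |Real.cos u| < Real.cos x'}
  set w := gaussianLevel x ^ (p / 2) with hw
  set w' := gaussianLevel x' ^ (p / 2) with hw'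
  have hw0 : 0 < w := Real.rpow_pos_of_pos hf0 _
  have hw0' : 0 < w' := Real.rpow_pos_of_pos hf0' _
  rw [Real.rpow_neg hf0.le, ← hw, ← one_div, le_div_iff₀ hw0] at hle
  rw [Real.rpow_neg hf0'.le, ← hw', ← one_div, le_div_iff₀ hw0']
  have hδ : 0 < w * (Real.pi / 2 - x) := mul_pos hw0 (by linarith)
  refine le_of_mul_le_mul_left ?_ hδ
  calc w * (Real.pi / 2 - x) * (G' * w') = w * w' * ((Real.pi / 2 - x) * G') := by ring
    _ ≤ w * w' * ((Real.pi / 2 - x') * G) := by gcongr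
    _ = w' * (Real.pi / 2 - x') * (G * w) := by ring
    _ ≤ w' * (Real.pi / 2 - x') * 1 :=
        mul_le_mul_of_nonneg_left hle (mul_nonneg hw0'.le (by linarith))
    _ ≤ w * (Real.pi / 2 - x) * 1 := by linarith

lemma mul_stableMeasure_abs_cos_lt_cos_le_of_le (hp : 7 / 4 ≤ p) (hp2 : p < 2) {x x' : ℝ}
    (hx0 : 0 < x) (hxx' : x ≤ x') (hx' : x' < Real.pi / 2)
    (hle : p * (stableMeasure p).real {u | |Real.cos u| < Real.cos x}
      ≤ gaussianLevel x ^ (-(p / 2))) :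
    p * (stableMeasure p).real {u | |Real.cos u| < Real.cos x'}
      ≤ gaussianLevel x' ^ (-(p / 2)) := by
  have hp0 : 0 < p := by linarith
  rcases le_total (gaussianLevel x') p with hfp | hfp
  · exact mul_stableMeasure_abs_cos_lt_cos_le_of_gaussianLevel_le hp hp2 hx0 hxx' hx' hfp hle
  rcases le_total p (gaussianLevel x) with hpf | hpf
  · exact mul_stableMeasure_abs_cos_lt_cos_le_of_le_gaussianLevel hp0 hx0 hxx' hx' hpf hle
  have hcont : ContinuousOn gaussianLevel (Icc x x') := fun y hy =>
    (hasDerivAt_gaussianLevel (cos_pos_of_nonneg_of_lt_pi_div_two (hx0.le.trans hy.1)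
      (hy.2.trans_lt hx')).ne').continuousAt.continuousWithinAt
  obtain ⟨c, hc, hcp⟩ := intermediate_value_Icc hxx' hcont ⟨hpf, hfp⟩
  exact mul_stableMeasure_abs_cos_lt_cos_le_of_le_gaussianLevel hp0 (hx0.trans_le hc.1) hc.2 hx'
    hcp.ge (mul_stableMeasure_abs_cos_lt_cos_le_of_gaussianLevel_le hp hp2 hx0 hc.1
      (hc.2.trans_lt hx') hcp.le hle)

lemma stableMeasure_exp_neg_sq_lt_cos (hp0 : 0 < p) {x : ℝ} (hx0 : 0 < x) (hx : x < Real.pi / 2) :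
    stableMeasure p {u | Real.exp (-(u ^ 2 / 2)) < Real.cos x}
      = ENNReal.ofReal (gaussianLevel x ^ (-(p / 2)) / p) := by
  have hf0 := gaussianLevel_pos hx0 hx
  have hset : {u | Real.exp (-(u ^ 2 / 2)) < Real.cos x} =ᵐ[stableMeasure p]
      Ioi √(gaussianLevel x) := by
    filter_upwards [ae_pos_stableMeasure] with u hu
    refine propext ((Real.lt_log_iff_exp_lt
      (cos_pos_of_nonneg_of_lt_pi_div_two hx0.le hx)).symm.trans (Iff.trans ?_
      (Real.sqrt_lt' hu).symm))
    unfold gaussianLevel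
    constructor <;> intro h <;> linarith
  have hpow : √(gaussianLevel x) ^ (-p) = gaussianLevel x ^ (-(p / 2)) := by
    rw [Real.sqrt_eq_rpow, ← Real.rpow_mul hf0.le]
    ring_nf
  rw [measure_congr hset, stableMeasure_Ioi hp0 (Real.sqrt_pos.2 hf0), hpow]

lemma stableMeasure_abs_cos_lt_cos_le_exp_neg_sq_lt_cos_iff (hp0 : 0 < p) {x : ℝ} (hx0 : 0 < x)
    (hx : x < Real.pi / 2) :
    stableMeasure p {u | |Real.cos u| < Real.cos x}
        ≤ stableMeasure p {u | Real.exp (-(u ^ 2 / 2)) < Real.cos x} ↔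
      p * (stableMeasure p).real {u | |Real.cos u| < Real.cos x}
        ≤ gaussianLevel x ^ (-(p / 2)) := by
  rw [stableMeasure_exp_neg_sq_lt_cos hp0 hx0 hx, ENNReal.le_ofReal_iff_toReal_le
    (stableMeasure_abs_cos_lt_cos_ne_top hp0 hx0 hx.le)
    (by have := gaussianLevel_pos hx0 hx; positivity), le_div_iff₀' hp0, measureReal_def]

lemma integral_one_sub_abs_cos_sq (hp0 : 0 < p) :
    ∫ u, (1 - |Real.cos u| ^ (2 : ℝ)) ∂stableMeasure p = 2 ^ p / 2 * stableConst p := by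
  have hcos : ∀ u : ℝ, 1 - |Real.cos u| ^ (2 : ℝ) = (1 - Real.cos (2 * u)) / 2 := fun u => by
    rw [Real.rpow_two, sq_abs, Real.cos_sq]
    ring
  simp only [hcos]
  rw [integral_div, integral_one_sub_cos_mul hp0, abs_two]
  ring

lemma one_sub_rpow_le_mul_one_sub {s t : ℝ} (ht0 : 0 ≤ t) (hs : 1 ≤ s) :
    1 - t ^ s ≤ s * (1 - t) := by
  have := one_add_mul_self_le_rpow_one_add (by linarith : -1 ≤ t - 1) hs
  rw [add_sub_cancel] at this
  linarith

lemma integrable_one_sub_abs_cos_mul_rpow (hp0 : 0 < p) (hp2 : p < 2) (x : ℝ) {s : ℝ}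
    (hs : 1 ≤ s) : Integrable (fun u => 1 - |Real.cos (x * u)| ^ s) (stableMeasure p) := by
  have h0 : ∀ u, 0 ≤ 1 - |Real.cos (x * u)| ^ s := fun u =>
    sub_nonneg.2 (Real.rpow_le_one (abs_nonneg _) (Real.abs_cos_le_one _) (by linarith))
  refine integrable_stableMeasure_of_abs_le hp0 hp2 (C := s / 2 * x ^ 2) (D := 1) (by fun_prop)
    (fun u => ?_) fun u => ?_
  all_goals rw [abs_of_nonneg (h0 u)]
  · have h1 := one_sub_rpow_le_mul_one_sub (abs_nonneg (Real.cos (x * u))) hs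
    have h2 := Real.one_sub_sq_div_two_le_cos (x := x * u)
    nlinarith [le_abs_self (Real.cos (x * u))]
  · linarith [Real.rpow_nonneg (abs_nonneg (Real.cos (x * u))) s]

lemma integrable_one_sub_exp_neg_sq_rpow (hp0 : 0 < p) (hp2 : p < 2) {s : ℝ} (hs : 0 ≤ s) :
    Integrable (fun u => 1 - Real.exp (-(u ^ 2 / 2)) ^ s) (stableMeasure p) := by
  have hpow : ∀ u : ℝ, Real.exp (-(u ^ 2 / 2)) ^ s = Real.exp (-(s / 2 * u ^ 2)) := fun u => by
    rw [← Real.exp_mul]; ring_nf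
  simp only [hpow]
  have h0 : ∀ u : ℝ, 0 ≤ 1 - Real.exp (-(s / 2 * u ^ 2)) := fun u =>
    sub_nonneg.2 (Real.exp_le_one_iff.2 (by have := sq_nonneg u; nlinarith))
  refine integrable_stableMeasure_of_abs_le hp0 hp2 (C := s / 2) (D := 1) (by fun_prop)
    (fun u => ?_) fun u => ?_
  all_goals rw [abs_of_nonneg (h0 u)]
  · linarith [Real.one_sub_le_exp_neg (s / 2 * u ^ 2)]
  · linarith [Real.exp_pos (-(s / 2 * u ^ 2))]

lemma stableMeasure_abs_cos_lt_le_of_le (hp : 7 / 4 ≤ p) (hp2 : p < 2) {y y' : ℝ} (hy1 : y < 1)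
    (hle : stableMeasure p {u | |Real.cos u| < y}
      ≤ stableMeasure p {u | Real.exp (-(u ^ 2 / 2)) < y}) (hy' : y' ∈ Ioc 0 y) :
    stableMeasure p {u | |Real.cos u| < y'}
      ≤ stableMeasure p {u | Real.exp (-(u ^ 2 / 2)) < y'} := by
  have hp0 : 0 < p := by linarith
  have hx0 : 0 < Real.arccos y := Real.arccos_pos.2 hy1
  have hxx' : Real.arccos y ≤ Real.arccos y' := Real.arccos_le_arccos hy'.2
  have hx' : Real.arccos y' < Real.pi / 2 := Real.arccos_lt_pi_div_two.2 hy'.1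
  rw [← Real.cos_arccos (x := y) (by linarith [hy'.1, hy'.2]) hy1.le,
    stableMeasure_abs_cos_lt_cos_le_exp_neg_sq_lt_cos_iff hp0 hx0 (hxx'.trans_lt hx')] at hle
  rw [← Real.cos_arccos (x := y') (by linarith [hy'.1]) (hy'.2.trans hy1.le),
    stableMeasure_abs_cos_lt_cos_le_exp_neg_sq_lt_cos_iff hp0 (hx0.trans_le hxx') hx']
  exact mul_stableMeasure_abs_cos_lt_cos_le_of_le hp hp2 hx0 hxx' hx' hle

lemma exp_neg_sq_div_two_le_one (u : ℝ) : Real.exp (-(u ^ 2 / 2)) ≤ 1 :=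
  Real.exp_le_one_iff.2 (by have := sq_nonneg u; linarith)

lemma lintegral_one_sub_abs_cos_rpow (hp0 : 0 < p) (hp2 : p < 2) {s : ℝ} (hs : 1 ≤ s) :
    ∫⁻ u, ENNReal.ofReal (1 - |Real.cos u| ^ s) ∂stableMeasure p
      = ENNReal.ofReal (∫ u, (1 - |Real.cos u| ^ s) ∂stableMeasure p) :=
  (ofReal_integral_eq_lintegral_ofReal
    (by simpa using integrable_one_sub_abs_cos_mul_rpow hp0 hp2 1 hs)
    (ae_of_all _ fun u => sub_nonneg.2
      (Real.rpow_le_one (abs_nonneg _) (Real.abs_cos_le_one u) (by linarith)))).symm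

lemma lintegral_one_sub_exp_neg_sq_rpow (hp0 : 0 < p) (hp2 : p < 2) {s : ℝ} (hs : 0 < s) :
    ∫⁻ u, ENNReal.ofReal (1 - Real.exp (-(u ^ 2 / 2)) ^ s) ∂stableMeasure p
      = ENNReal.ofReal (s ^ (p / 2) * (gaussianAbsMoment p * stableConst p)) := by
  rw [← integral_one_sub_exp_neg_mul_sq hp0 hp2 hs]
  exact (ofReal_integral_eq_lintegral_ofReal (integrable_one_sub_exp_neg_sq_rpow hp0 hp2 hs.le)
    (ae_of_all _ fun u => sub_nonneg.2
      (Real.rpow_le_one (Real.exp_pos _).le (exp_neg_sq_div_two_le_one u) hs.le))).symm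

lemma rpow_mul_gaussianAbsMoment_le_integral_abs_cos (hp : 7 / 4 ≤ p) (hp2 : p < 2)
    (hγ : gaussianAbsMoment p ≤ 2 ^ (p / 2 - 1)) {s : ℝ} (hs : 2 ≤ s) :
    s ^ (p / 2) * (gaussianAbsMoment p * stableConst p)
      ≤ ∫ u, (1 - |Real.cos u| ^ s) ∂stableMeasure p := by
  have hp0 : 0 < p := by linarith
  have hκ := stableConst_pos hp0 hp2
  have hstart : 2 ^ (p / 2) * (gaussianAbsMoment p * stableConst p)
      ≤ ∫ u, (1 - |Real.cos u| ^ (2 : ℝ)) ∂stableMeasure p := by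
    rw [integral_one_sub_abs_cos_sq hp0, ← mul_assoc]
    refine mul_le_mul_of_nonneg_right ?_ hκ.le
    calc (2 : ℝ) ^ (p / 2) * gaussianAbsMoment p ≤ 2 ^ (p / 2) * 2 ^ (p / 2 - 1) := by gcongr
      _ = 2 ^ p / 2 := by
        rw [Real.rpow_sub_one two_ne_zero, ← mul_div_assoc, ← Real.rpow_add two_pos, add_halves]
  have hle := lintegral_one_sub_rpow_le_of_crossing (μ := stableMeasure p) (s := s)
    (f := fun u => |Real.cos u|) (g := fun u => Real.exp (-(u ^ 2 / 2))) (by fun_prop)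
    (fun u => abs_nonneg _) Real.abs_cos_le_one (by fun_prop) (fun u => (Real.exp_pos _).le)
    exp_neg_sq_div_two_le_one
    (fun y hy1 hle y' hy' => stableMeasure_abs_cos_lt_le_of_le hp hp2 hy1 hle hy')
    (lintegral_one_sub_abs_cos_rpow hp0 hp2 one_le_two ▸ ENNReal.ofReal_ne_top)
    (by
      rw [lintegral_one_sub_exp_neg_sq_rpow hp0 hp2 two_pos,
        lintegral_one_sub_abs_cos_rpow hp0 hp2 one_le_two]
      exact ENNReal.ofReal_le_ofReal hstart) hs
  rw [lintegral_one_sub_exp_neg_sq_rpow hp0 hp2 (by linarith),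
    lintegral_one_sub_abs_cos_rpow hp0 hp2 (by linarith)] at hle
  exact (ENNReal.ofReal_le_ofReal_iff (integral_nonneg fun u => sub_nonneg.2
    (Real.rpow_le_one (abs_nonneg _) (Real.abs_cos_le_one u) (by linarith)))).1 hle

end CosineVersusGaussian

/-- The `p`-th absolute moment `𝔼 |∑ εᵢ aᵢ| ^ p` of a Rademacher sum, the average running over all
sign vectors `ε`. -/
noncomputable def rademacherMoment {ι : Type*} [Fintype ι] [DecidableEq ι] (p : ℝ)
    (a : ι → ℝ) : ℝ :=
  𝔼 ε : ι → ℤˣ, |∑ i, ((ε i : ℤ) : ℝ) * a i| ^ p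

section RademacherMoment

variable {ι ι₁ ι₂ : Type*} [Fintype ι] [DecidableEq ι] [Fintype ι₁] [DecidableEq ι₁]
  [Fintype ι₂] [DecidableEq ι₂] {p : ℝ}

lemma expect_cos_sum_signs (t : ι → ℝ) :
    𝔼 ε : ι → ℤˣ, Real.cos (∑ i, ((ε i : ℤ) : ℝ) * t i) = ∏ i, Real.cos (t i) := by
  have hcos : ∀ i, ∑ e : ℤˣ, Complex.exp (((e : ℤ) : ℂ) * t i * Complex.I)
      = ((2 * Real.cos (t i) : ℝ) : ℂ) := fun i => by
    rw [UnitsInt.univ, Finset.sum_pair (by decide)]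
    simp [Complex.two_cos]
  have hsum : ∑ ε : ι → ℤˣ, Complex.exp ((∑ i, ((ε i : ℤ) : ℝ) * t i : ℝ) * Complex.I)
      = ((2 ^ Fintype.card ι * ∏ i, Real.cos (t i) : ℝ) : ℂ) := by
    calc _ = ∑ ε : ι → ℤˣ, ∏ i, Complex.exp (((ε i : ℤ) : ℂ) * t i * Complex.I) := by
          simp only [← Complex.exp_sum, ← Finset.sum_mul]
          push_cast
          rfl
      _ = ∏ i, ∑ e : ℤˣ, Complex.exp (((e : ℤ) : ℂ) * t i * Complex.I) := by
          rw [Finset.prod_univ_sum, Fintype.piFinset_univ]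
      _ = _ := by
          simp only [hcos, ← Complex.ofReal_prod, Finset.prod_mul_distrib, Finset.prod_const,
            Finset.card_univ]
  have hre := congrArg Complex.re hsum
  rw [Complex.re_sum, Complex.ofReal_re] at hre
  simp only [Complex.exp_ofReal_mul_I_re] at hre
  rw [Fintype.expect_eq_sum_div_card, hre, Fintype.card_fun, Fintype.card_units_int]
  push_cast
  field_simp

lemma one_sub_prod_cos (a : ι → ℝ) (u : ℝ) :
    1 - ∏ i, Real.cos (a i * u)
      = 𝔼 ε : ι → ℤˣ, (1 - Real.cos ((∑ i, ((ε i : ℤ) : ℝ) * a i) * u)) := by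
  rw [Finset.expect_sub_distrib, Fintype.expect_const]
  simp only [Finset.sum_mul, mul_assoc, expect_cos_sum_signs fun i => a i * u]

lemma rademacherMoment_mul_stableConst (hp0 : 0 < p) (hp2 : p < 2) (a : ι → ℝ) :
    rademacherMoment p a * stableConst p
      = ∫ u, (1 - ∏ i, Real.cos (a i * u)) ∂stableMeasure p := by
  simp only [one_sub_prod_cos, rademacherMoment, Fintype.expect_eq_sum_div_card]
  rw [integral_div, integral_finsetSum _ fun ε _ => integrable_one_sub_cos_mul hp0 hp2 _]
  simp only [integral_one_sub_cos_mul hp0]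
  rw [← Finset.sum_mul, div_mul_eq_mul_div]

lemma integrable_one_sub_prod_cos {κ : Type*} [Fintype κ] (hp0 : 0 < p) (hp2 : p < 2)
    (a : κ → ℝ) :
    Integrable (fun u => 1 - ∏ i, Real.cos (a i * u)) (stableMeasure p) := by
  classical
  simp only [one_sub_prod_cos, Fintype.expect_eq_sum_div_card]
  exact (integrable_finsetSum _ fun ε _ => integrable_one_sub_cos_mul hp0 hp2 _).div_const _

lemma rademacherMoment_eq_add_div_two (hp0 : 0 < p) (hp2 : p < 2) {a : ι → ℝ} {b : ι₁ → ℝ}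
    {c : ι₂ → ℝ} (h : ∀ u, ∏ i, Real.cos (a i * u)
      = ((∏ i, Real.cos (b i * u)) + ∏ i, Real.cos (c i * u)) / 2) :
    rademacherMoment p a = (rademacherMoment p b + rademacherMoment p c) / 2 := by
  refine mul_right_cancel₀ (stableConst_pos hp0 hp2).ne' ?_
  rw [div_mul_eq_mul_div, add_mul]
  simp only [rademacherMoment_mul_stableConst hp0 hp2]
  rw [← integral_add (integrable_one_sub_prod_cos hp0 hp2 b)
    (integrable_one_sub_prod_cos hp0 hp2 c), ← integral_div]
  refine integral_congr_ae (ae_of_all _ fun u => ?_)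
  simp only [h u]
  ring

lemma rademacherMoment_mul (c : ℝ) (a : ι → ℝ) :
    rademacherMoment p (fun i => c * a i) = |c| ^ p * rademacherMoment p a := by
  simp only [rademacherMoment, Finset.mul_expect]
  refine Finset.expect_congr rfl fun ε _ => ?_
  rw [← Real.mul_rpow (abs_nonneg _) (abs_nonneg _), ← abs_mul, Finset.mul_sum]
  simp only [mul_left_comm]

lemma expect_sign_mul_sign (i j : ι) :
    𝔼 ε : ι → ℤˣ, ((ε i : ℤ) : ℝ) * ((ε j : ℤ) : ℝ) = if i = j then 1 else 0 := by
  split_ifs with hij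
  · subst hij
    simp only [← Int.cast_mul, Int.units_coe_mul_self, Int.cast_one, Fintype.expect_const]
  · have hflip := Fintype.expect_equiv (Equiv.mulLeft (Pi.mulSingle i (-1) : ι → ℤˣ))
      (fun ε => -(((ε i : ℤ) : ℝ) * ((ε j : ℤ) : ℝ))) (fun ε => ((ε i : ℤ) : ℝ) * ((ε j : ℤ) : ℝ))
      fun ε => by simp [Pi.mulSingle_eq_of_ne' hij]
    rw [Finset.expect_neg_distrib] at hflip
    linarith

lemma rademacherMoment_two (a : ι → ℝ) : rademacherMoment 2 a = ∑ i, a i ^ 2 := by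
  calc rademacherMoment 2 a
      = 𝔼 ε : ι → ℤˣ, ∑ i, ∑ j, a i * a j * (((ε i : ℤ) : ℝ) * ((ε j : ℤ) : ℝ)) := by
        refine Finset.expect_congr rfl fun ε _ => ?_
        rw [Real.rpow_two, sq_abs, sq, Finset.sum_mul_sum]
        exact Finset.sum_congr rfl fun i _ => Finset.sum_congr rfl fun j _ => by ring
    _ = ∑ i, ∑ j, a i * a j * (if i = j then 1 else 0) := by
        simp only [Finset.expect_sum_comm, ← Finset.mul_expect, expect_sign_mul_sign]
    _ = ∑ i, a i ^ 2 := by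
        simp only [mul_ite, mul_one, mul_zero, Finset.sum_ite_eq, Finset.mem_univ, if_true, sq]

end RademacherMoment

lemma abs_rpow_eq_sq_rpow (x p : ℝ) : |x| ^ p = (x ^ 2) ^ (p / 2) := by
  rw [← sq_abs, ← Real.rpow_natCast, ← Real.rpow_mul (abs_nonneg x), Nat.cast_ofNat,
    mul_div_cancel₀ p two_ne_zero]

lemma prod_cos_le_sum_mul_abs_cos_rpow {ι : Type*} [Fintype ι] (a : ι → ℝ) {v : ℝ}
    (hv : ∑ i, a i ^ 2 = v) (hv0 : 0 < v) (u : ℝ) :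
    ∏ i, Real.cos (a i * u) ≤ ∑ i, a i ^ 2 / v * |Real.cos (a i * u)| ^ (v / a i ^ 2) := by
  have hw : ∀ i, (|Real.cos (a i * u)| ^ (v / a i ^ 2)) ^ (a i ^ 2 / v) = |Real.cos (a i * u)| := by
    intro i
    rw [← Real.rpow_mul (abs_nonneg _)]
    rcases eq_or_ne (a i) 0 with h | h
    · simp [h]
    · rw [div_mul_div_cancel₀ (by positivity), div_self hv0.ne', Real.rpow_one]
  calc ∏ i, Real.cos (a i * u) ≤ ∏ i, |Real.cos (a i * u)| := by
        rw [← Finset.abs_prod]; exact le_abs_self _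
    _ = ∏ i, (|Real.cos (a i * u)| ^ (v / a i ^ 2)) ^ (a i ^ 2 / v) := by simp only [hw]
    _ ≤ _ := Real.geom_mean_le_arith_mean_weighted _ _ _ (fun i _ => by positivity)
        (by rw [← Finset.sum_div, hv, div_self hv0.ne']) fun i _ => by positivity

section SpreadCoefficients

variable {ι : Type*} [Fintype ι] [DecidableEq ι] {p : ℝ}

lemma rademacherMoment_nonneg (a : ι → ℝ) : 0 ≤ rademacherMoment p a :=
  Finset.expect_nonneg fun _ _ => Real.rpow_nonneg (abs_nonneg _) _

lemma abs_rpow_mul_le_integral_abs_cos_mul (hp : 7 / 4 ≤ p) (hp2 : p < 2)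
    (hγ : gaussianAbsMoment p ≤ 2 ^ (p / 2 - 1)) {x v : ℝ} (hx : x ≠ 0) (hv : 2 * x ^ 2 ≤ v) :
    v ^ (p / 2) * (gaussianAbsMoment p * stableConst p)
      ≤ ∫ u, (1 - |Real.cos (x * u)| ^ (v / x ^ 2)) ∂stableMeasure p := by
  have hx2 : 0 < x ^ 2 := by positivity
  have hscale : |x| ^ p * (v / x ^ 2) ^ (p / 2) = v ^ (p / 2) := by
    rw [abs_rpow_eq_sq_rpow, Real.div_rpow (by linarith) hx2.le,
      mul_div_cancel₀ _ (Real.rpow_pos_of_pos hx2 _).ne']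
  have hcos : ∀ u, |Real.cos (x * u)| = |Real.cos (|x| * u)| := fun u => by
    rw [← Real.cos_abs (x * u), abs_mul, ← Real.cos_abs (|x| * u), abs_mul, abs_abs]
  simp only [hcos]
  rw [integral_comp_mul_left_stableMeasure (abs_pos.2 hx) fun u => 1 - |Real.cos u| ^ (v / x ^ 2),
    ← hscale, mul_assoc]
  gcongr
  exact rpow_mul_gaussianAbsMoment_le_integral_abs_cos hp hp2 hγ ((le_div_iff₀ hx2).2 hv)

lemma gaussianAbsMoment_mul_le_rademacherMoment_of_two_mul_sq_le (hp : 7 / 4 ≤ p) (hp2 : p < 2)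
    (hγ : gaussianAbsMoment p ≤ 2 ^ (p / 2 - 1)) {a : ι → ℝ}
    (ha : ∀ j, 2 * a j ^ 2 ≤ ∑ i, a i ^ 2) :
    gaussianAbsMoment p * (∑ i, a i ^ 2) ^ (p / 2) ≤ rademacherMoment p a := by
  have hp0 : 0 < p := by linarith
  obtain ⟨v, hv⟩ : ∃ v, ∑ i, a i ^ 2 = v := ⟨_, rfl⟩
  rw [hv] at ha ⊢
  rcases (hv ▸ Finset.sum_nonneg fun i _ => sq_nonneg (a i) : 0 ≤ v).eq_or_lt with h0 | hv0
  · rw [← h0, Real.zero_rpow (by linarith), mul_zero]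
    exact rademacherMoment_nonneg a
  have hsum : ∑ i, a i ^ 2 / v = 1 := by rw [← Finset.sum_div, hv, div_self hv0.ne']
  have hterm : ∀ i, a i ^ 2 / v * (v ^ (p / 2) * (gaussianAbsMoment p * stableConst p))
      ≤ ∫ u, a i ^ 2 / v * (1 - |Real.cos (a i * u)| ^ (v / a i ^ 2)) ∂stableMeasure p := by
    intro i
    rw [integral_const_mul]
    rcases eq_or_ne (a i) 0 with h | h
    · simp [h]
    · exact mul_le_mul_of_nonneg_left (abs_rpow_mul_le_integral_abs_cos_mul hp hp2 hγ h (ha i))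
        (by positivity)
  have hinteg : ∀ i, Integrable (fun u => a i ^ 2 / v * (1 - |Real.cos (a i * u)| ^ (v / a i ^ 2)))
      (stableMeasure p) := fun i => by
    rcases eq_or_ne (a i) 0 with h | h
    · simp [h]
    · refine (integrable_one_sub_abs_cos_mul_rpow hp0 hp2 _ ?_).const_mul _
      rw [le_div_iff₀ (by positivity)]
      nlinarith [ha i, sq_nonneg (a i)]
  refine le_of_mul_le_mul_right ?_ (stableConst_pos hp0 hp2)
  calc gaussianAbsMoment p * v ^ (p / 2) * stableConst p
      = ∑ i, a i ^ 2 / v * (v ^ (p / 2) * (gaussianAbsMoment p * stableConst p)) := by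
        rw [← Finset.sum_mul, hsum]; ring
    _ ≤ ∫ u, ∑ i, a i ^ 2 / v * (1 - |Real.cos (a i * u)| ^ (v / a i ^ 2)) ∂stableMeasure p := by
        rw [integral_finsetSum _ fun i _ => hinteg i]
        exact Finset.sum_le_sum fun i _ => hterm i
    _ ≤ ∫ u, (1 - ∏ i, Real.cos (a i * u)) ∂stableMeasure p := by
        refine integral_mono (integrable_finsetSum _ fun i _ => hinteg i)
          (integrable_one_sub_prod_cos hp0 hp2 a) fun u => ?_
        simp only [mul_sub, mul_one, Finset.sum_sub_distrib, hsum]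
        exact sub_le_sub_left (prod_cos_le_sum_mul_abs_cos_rpow a hv hv0 u) 1
    _ = rademacherMoment p a * stableConst p := (rademacherMoment_mul_stableConst hp0 hp2 a).symm

end SpreadCoefficients

section MomentMajorant

lemma rpow_add_add_rpow_le {q s x y : ℝ} (hq0 : 0 ≤ q) (hq1 : q ≤ 1) (hs : 0 ≤ s) (hx : 0 ≤ x)
    (hy : 0 ≤ y) : (s + x + y) ^ q + s ^ q ≤ (s + x) ^ q + (s + y) ^ q := by
  rcases (add_nonneg hx hy).eq_or_lt with h0 | hxy
  · rw [show x = 0 by linarith, show y = 0 by linarith]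
    simp
  have hweight : x / (x + y) + y / (x + y) = 1 := by rw [← add_div, div_self hxy.ne']
  have hconcave := (Real.concaveOn_rpow hq0 hq1).2
  have h₁ := hconcave (x := s + x + y) (y := s) (Set.mem_Ici.2 (by positivity)) hs
    (div_nonneg hx hxy.le) (div_nonneg hy hxy.le) hweight
  have h₂ := hconcave (x := s + x + y) (y := s) (Set.mem_Ici.2 (by positivity)) hs
    (div_nonneg hy hxy.le) (div_nonneg hx hxy.le) (by rw [add_comm, hweight])
  simp only [smul_eq_mul] at h₁ h₂
  rw [show x / (x + y) * (s + x + y) + y / (x + y) * s = s + x by field_simp; ring] at h₁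
  rw [show y / (x + y) * (s + x + y) + x / (x + y) * s = s + y by field_simp; ring] at h₂
  linear_combination h₁ + h₂ - hweight * ((s + x + y) ^ q + s ^ q)

/-- The function `Φ` of Nazarov and Podkorytov: above `1` it is `(1 + x) ^ q`, below `1` the
reflection of that function in the point `(1, 2 ^ q)`. It replaces `(1 + x) ^ q` in the inductive
proof of Khintchine's inequality because it is midpoint convex on pairs with mean at most `1`. -/
noncomputable def momentMajorant (q x : ℝ) : ℝ :=
  if x ≤ 1 then 2 * 2 ^ q - (3 - x) ^ q else (1 + x) ^ q

variable {q : ℝ}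

lemma one_add_rpow_le_momentMajorant (hq0 : 0 ≤ q) (hq1 : q ≤ 1) {x : ℝ} (hx : 0 ≤ x) :
    (1 + x) ^ q ≤ momentMajorant q x := by
  rw [momentMajorant]
  split_ifs with h
  · have := rpow_add_add_rpow_le hq0 hq1 (s := 1 + x) (x := 1 - x) (y := 1 - x) (by linarith)
      (by linarith) (by linarith)
    ring_nf at this ⊢
    linarith
  · exact le_rfl

lemma momentMajorant_half_add_le (hq0 : 0 ≤ q) (hq1 : q ≤ 1) {x y : ℝ} (hxy : x + y ≤ 2) :
    2 * momentMajorant q ((x + y) / 2) ≤ momentMajorant q x + momentMajorant q y := by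
  wlog hle : x ≤ y generalizing x y
  · rw [add_comm x y, add_comm (momentMajorant q x)]
    exact this (by linarith) (by linarith)
  have hx : x ≤ 1 := by linarith
  have hm : (x + y) / 2 ≤ 1 := by linarith
  rw [momentMajorant, momentMajorant, momentMajorant, if_pos hm, if_pos hx]
  split_ifs with hy
  · have := rpow_add_add_rpow_le hq0 hq1 (s := 3 - y) (x := (y - x) / 2) (y := (y - x) / 2)
      (by linarith) (by linarith) (by linarith)
    ring_nf at this ⊢
    linarith
  · have h₁ := rpow_add_add_rpow_le hq0 hq1 (s := 2) (x := 2 - (x + y)) (y := y - 1)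
      (by linarith) (by linarith) (by linarith)
    have h₂ := rpow_add_add_rpow_le hq0 hq1 (s := 2) (x := 1 - (x + y) / 2)
      (y := 1 - (x + y) / 2) (by linarith) (by linarith) (by linarith)
    ring_nf at h₁ h₂ ⊢
    linarith

lemma self_add_mul_log_le_rpow (hq : 0 < q) {s : ℝ} (hs : 0 ≤ s) :
    s + (q - 1) * (s * Real.log s) ≤ s ^ q := by
  rcases hs.eq_or_lt with rfl | hs
  · simp [hq.ne']
  have hexp : 1 + (q - 1) * Real.log s ≤ s ^ (q - 1) := by
    rw [Real.rpow_def_of_pos hs]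
    linarith [Real.add_one_le_exp (Real.log s * (q - 1))]
  calc s + (q - 1) * (s * Real.log s) = s * (1 + (q - 1) * Real.log s) := by ring
    _ ≤ s * s ^ (q - 1) := by gcongr
    _ = s ^ q := by rw [Real.rpow_sub_one hs.ne', mul_div_cancel₀ _ hs.ne']

lemma log_one_sub_le {r : ℝ} (hr0 : 0 ≤ r) (hr1 : r < 1) :
    Real.log (1 - r) ≤ -r - r ^ 2 / 2 - r ^ 3 / 3 := by
  have hseries := sum_le_hasSum (Finset.range 3) (fun i _ => by positivity)
    (Real.hasSum_pow_div_log_of_abs_lt_one (abs_lt.2 ⟨by linarith, hr1⟩))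
  norm_num [Finset.sum_range_succ] at hseries
  linarith

lemma log_one_add_le {w : ℝ} (hw0 : 0 ≤ w) (hw1 : w ≤ 1 / 2) :
    Real.log (1 + w) ≤ w - w ^ 2 / 2 + w ^ 3 / 3 := by
  rw [Real.log_le_iff_le_exp (by linarith)]
  have hy : 0 ≤ w - w ^ 2 / 2 + w ^ 3 / 3 := by nlinarith [pow_nonneg hw0 3]
  have hexp := Real.sum_le_exp_of_nonneg hy 4
  norm_num [Finset.sum_range_succ, Nat.factorial] at hexp
  have hrest : 0 ≤ w ^ 4 * (5 / 24 - 19 / 144 * w ^ 2 - 1 / 36 * w ^ 4) :=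
    mul_nonneg (by positivity) (by nlinarith [sq_nonneg w])
  linarith [pow_nonneg hw0 5, pow_nonneg hw0 7, pow_nonneg hw0 9]

lemma sum_mul_log_nonpos {r : ℝ} (hr0 : 0 ≤ r) (hr : r ≤ 1 / 2) :
    (1 - r) ^ 2 * Real.log ((1 - r) ^ 2) + r ^ 2 * Real.log (r ^ 2)
      + (1 + 2 * r * (1 - r)) * Real.log (1 + 2 * r * (1 - r)) ≤ 0 := by
  rcases hr0.eq_or_lt with rfl | hr0
  · simp
  have hlog : Real.log r ≤ 2 * r - 1 - 0.693 := by
    have := Real.log_le_sub_one_of_pos (mul_pos two_pos hr0)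
    rw [Real.log_mul two_ne_zero hr0.ne'] at this
    linarith [Real.log_two_gt_d9]
  have hlog_sub := log_one_sub_le hr0.le (by linarith)
  have hlog_add := log_one_add_le (w := 2 * r * (1 - r)) (by nlinarith)
    (by nlinarith [sq_nonneg (1 - 2 * r)])
  rw [Real.log_pow, Real.log_pow]
  push_cast
  have h₁ := mul_le_mul_of_nonneg_left hlog_sub (sq_nonneg (1 - r))
  have h₂ := mul_le_mul_of_nonneg_left hlog (sq_nonneg r)
  have h₃ := mul_le_mul_of_nonneg_left hlog_add (by nlinarith : 0 ≤ 1 + 2 * r * (1 - r))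
  have hpoly : 2 * (1 - r) ^ 2 * (-r - r ^ 2 / 2 - r ^ 3 / 3) + 2 * r ^ 2 * (2 * r - 1 - 0.693)
      + (1 + 2 * r * (1 - r)) * (2 * r * (1 - r) - (2 * r * (1 - r)) ^ 2 / 2
        + (2 * r * (1 - r)) ^ 3 / 3) ≤ 0 := by
    have hbernstein : ∀ k m, 0 ≤ r ^ 2 * (r ^ k * (1 - 2 * r) ^ m) := fun k m =>
      mul_nonneg (sq_nonneg r) (mul_nonneg (pow_nonneg hr0.le k) (pow_nonneg (by linarith) m))
    linarith [hbernstein 0 6, hbernstein 1 5, hbernstein 2 4, hbernstein 3 3, hbernstein 4 2,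
      hbernstein 5 1, hbernstein 6 0]
  linarith

lemma two_mul_four_rpow_le (hq0 : 0 < q) (hq1 : q ≤ 1) {a : ℝ} (ha0 : 0 ≤ a) (ha1 : a ≤ 1) :
    2 * 4 ^ q ≤ (2 * (3 - a ^ 2)) ^ q + ((1 + a) ^ 2) ^ q + ((1 - a) ^ 2) ^ q := by
  have hentropy := sum_mul_log_nonpos (r := (1 - a) / 2) (by linarith) (by linarith)
  have h₁ := self_add_mul_log_le_rpow hq0 (sq_nonneg (1 - (1 - a) / 2))
  have h₂ := self_add_mul_log_le_rpow hq0 (sq_nonneg ((1 - a) / 2))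
  have h₃ := self_add_mul_log_le_rpow hq0
    (by nlinarith : 0 ≤ 1 + 2 * ((1 - a) / 2) * (1 - (1 - a) / 2))
  have hsum : 2 ≤ ((1 - (1 - a) / 2) ^ 2) ^ q + (((1 - a) / 2) ^ 2) ^ q
      + (1 + 2 * ((1 - a) / 2) * (1 - (1 - a) / 2)) ^ q := by
    nlinarith [mul_nonneg (sub_nonneg.2 hq1) (neg_nonneg.2 hentropy)]
  calc 2 * 4 ^ q ≤ (((1 - (1 - a) / 2) ^ 2) ^ q + (((1 - a) / 2) ^ 2) ^ q
      + (1 + 2 * ((1 - a) / 2) * (1 - (1 - a) / 2)) ^ q) * 4 ^ q := by gcongr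
    _ = _ := by
        rw [add_mul, add_mul, ← Real.mul_rpow (by positivity) (by norm_num),
          ← Real.mul_rpow (by positivity) (by norm_num),
          ← Real.mul_rpow (by nlinarith) (by norm_num)]
        ring_nf

end MomentMajorant

section Haagerup

variable {ι κ : Type*} [Fintype ι] [DecidableEq ι] [Fintype κ] [DecidableEq κ] {p : ℝ}

lemma rademacherMoment_congr (hp0 : 0 < p) (hp2 : p < 2) {a : ι → ℝ} {b : κ → ℝ}
    (h : ∀ u, ∏ i, Real.cos (a i * u) = ∏ i, Real.cos (b i * u)) :
    rademacherMoment p a = rademacherMoment p b := by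
  rw [rademacherMoment_eq_add_div_two hp0 hp2 (b := b) (c := b) fun u => by rw [h u]; ring]
  ring

lemma rademacherMoment_unique [Unique ι] (a : ι → ℝ) :
    rademacherMoment p a = |a default| ^ p := by
  simp only [rademacherMoment, Fintype.sum_unique, abs_mul, abs_unit_intCast, one_mul,
    Fintype.expect_const]

lemma rademacherMoment_pair (hp0 : 0 < p) (hp2 : p < 2) (x y : ℝ) :
    rademacherMoment p ![x, y] = (|x + y| ^ p + |x - y| ^ p) / 2 := by
  rw [rademacherMoment_eq_add_div_two hp0 hp2 (b := ![x + y]) (c := ![x - y]),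
    rademacherMoment_unique, rademacherMoment_unique]
  · rfl
  · intro u
    simp only [Fin.prod_univ_two, Fin.prod_univ_one, Matrix.cons_val_zero, Matrix.cons_val_one,
      add_mul, sub_mul, Real.cos_add, Real.cos_sub]
    ring

lemma rademacherMoment_merge (hp0 : 0 < p) (hp2 : p < 2) {n : ℕ} (x y z : ℝ) (a : Fin n → ℝ) :
    rademacherMoment p (Matrix.vecCons x (Matrix.vecCons y (Matrix.vecCons z a)))
      = (rademacherMoment p (Matrix.vecCons x (Matrix.vecCons (y + z) a))
        + rademacherMoment p (Matrix.vecCons x (Matrix.vecCons (y - z) a))) / 2 := by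
  refine rademacherMoment_eq_add_div_two hp0 hp2 fun u => ?_
  simp only [Fin.prod_univ_succ, Matrix.cons_val_zero, Matrix.cons_val_succ, add_mul, sub_mul,
    Real.cos_add, Real.cos_sub]
  ring

lemma gaussianAbsMoment_mul_momentMajorant_le_of_abs_le_one (hp0 : 0 < p) (hp2 : p ≤ 2)
    (hγ : gaussianAbsMoment p ≤ 2 ^ (p / 2 - 1)) {x : ℝ} (hx : |x| ≤ 1) :
    gaussianAbsMoment p * momentMajorant (p / 2) (x ^ 2) ≤ (|1 + x| ^ p + |1 - x| ^ p) / 2 := by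
  wlog hx0 : 0 ≤ x generalizing x
  · have := this (x := -x) (by rwa [abs_neg]) (by linarith)
    rwa [neg_sq, ← sub_eq_add_neg, sub_neg_eq_add, add_comm (|1 - x| ^ p)] at this
  have hx1 : x ≤ 1 := (le_abs_self x).trans hx
  have hmajorant : 0 ≤ momentMajorant (p / 2) (x ^ 2) :=
    (by positivity : (0 : ℝ) ≤ (1 + x ^ 2) ^ (p / 2)).trans
      (one_add_rpow_le_momentMajorant (by linarith) (by linarith) (sq_nonneg x))
  have hfour : (4 : ℝ) ^ (p / 2) = 2 ^ (p / 2) * 2 ^ (p / 2) := by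
    rw [← Real.mul_rpow zero_le_two zero_le_two]; norm_num
  have hentropy := two_mul_four_rpow_le (q := p / 2) (by linarith) (by linarith) hx0 hx1
  rw [Real.mul_rpow zero_le_two (by nlinarith), hfour] at hentropy
  rw [abs_rpow_eq_sq_rpow, abs_rpow_eq_sq_rpow]
  calc gaussianAbsMoment p * momentMajorant (p / 2) (x ^ 2)
      ≤ 2 ^ (p / 2 - 1) * momentMajorant (p / 2) (x ^ 2) := by gcongr
    _ = 2 ^ (p / 2) / 2 * (2 * 2 ^ (p / 2) - (3 - x ^ 2) ^ (p / 2)) := by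
        rw [Real.rpow_sub_one two_ne_zero, momentMajorant, if_pos (by nlinarith)]
    _ ≤ _ := by linarith

lemma rademacherMoment_eq_abs_rpow_mul (hp0 : 0 < p) (hp2 : p < 2) {n : ℕ} {a : Fin (n + 1) → ℝ}
    {j : Fin (n + 1)} (hj : a j ≠ 0) :
    rademacherMoment p a
      = |a j| ^ p * rademacherMoment p (Matrix.vecCons 1 fun i => a (j.succAbove i) / a j) := by
  rw [← rademacherMoment_mul]
  refine rademacherMoment_congr hp0 hp2 fun u => ?_
  rw [Fin.prod_univ_succAbove _ j, Fin.prod_univ_succ]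
  simp only [Matrix.cons_val_zero, Matrix.cons_val_succ, mul_one, mul_div_cancel₀ _ hj]

lemma gaussianAbsMoment_mul_le_of_momentMajorant_le (hp : 7 / 4 ≤ p) (hp2 : p < 2)
    (hγ : gaussianAbsMoment p ≤ 2 ^ (p / 2 - 1)) {n : ℕ}
    (hmajorant : ∀ b : Fin n → ℝ, ∑ i, b i ^ 2 ≤ 1 →
      gaussianAbsMoment p * momentMajorant (p / 2) (∑ i, b i ^ 2)
        ≤ rademacherMoment p (Matrix.vecCons 1 b)) (a : Fin (n + 1) → ℝ) :
    gaussianAbsMoment p * (∑ i, a i ^ 2) ^ (p / 2) ≤ rademacherMoment p a := by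
  by_cases! hspread : ∀ j, 2 * a j ^ 2 ≤ ∑ i, a i ^ 2
  · exact gaussianAbsMoment_mul_le_rademacherMoment_of_two_mul_sq_le hp hp2 hγ hspread
  obtain ⟨j, hj⟩ := hspread
  have haj : a j ≠ 0 := by
    rintro h
    exact (Finset.sum_nonneg fun i _ => sq_nonneg (a i)).not_gt (by simpa [h] using hj)
  obtain ⟨b, hb⟩ : ∃ b : Fin n → ℝ, b = fun i => a (j.succAbove i) / a j := ⟨_, rfl⟩
  have hsum : ∑ i, a i ^ 2 = a j ^ 2 * (1 + ∑ i, b i ^ 2) := by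
    simp only [Fin.sum_univ_succAbove _ j, hb, div_pow, ← Finset.sum_div, mul_add, mul_one,
      mul_div_cancel₀ _ (pow_ne_zero 2 haj)]
  have hb1 : ∑ i, b i ^ 2 ≤ 1 := by
    by_contra! h
    nlinarith [sq_pos_of_ne_zero haj]
  have hb0 : 0 ≤ ∑ i, b i ^ 2 := Finset.sum_nonneg fun i _ => sq_nonneg (b i)
  rw [hsum, Real.mul_rpow (sq_nonneg _) (by positivity), ← abs_rpow_eq_sq_rpow,
    rademacherMoment_eq_abs_rpow_mul (by linarith) hp2 haj, ← hb, mul_left_comm]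
  gcongr
  refine le_trans ?_ (hmajorant b hb1)
  gcongr
  · exact (gaussianAbsMoment_pos (by linarith)).le
  · exact one_add_rpow_le_momentMajorant (by linarith) (by linarith) hb0

lemma gaussianAbsMoment_mul_momentMajorant_le_succ (hp : 7 / 4 ≤ p) (hp2 : p < 2)
    (hγ : gaussianAbsMoment p ≤ 2 ^ (p / 2 - 1)) {n : ℕ}
    (ih : ∀ b : Fin (n + 1) → ℝ, ∑ i, b i ^ 2 ≤ 1 →
      gaussianAbsMoment p * momentMajorant (p / 2) (∑ i, b i ^ 2)
        ≤ rademacherMoment p (Matrix.vecCons 1 b))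
    (b : Fin (n + 2) → ℝ) (hb : ∑ i, b i ^ 2 ≤ 1) :
    gaussianAbsMoment p * momentMajorant (p / 2) (∑ i, b i ^ 2)
      ≤ rademacherMoment p (Matrix.vecCons 1 b) := by
  have hall : ∀ c : Fin (n + 1) → ℝ,
      gaussianAbsMoment p * momentMajorant (p / 2) (∑ i, c i ^ 2)
        ≤ rademacherMoment p (Matrix.vecCons 1 c) := fun c => by
    by_cases hc : ∑ i, c i ^ 2 ≤ 1
    · exact ih c hc
    · have := gaussianAbsMoment_mul_le_of_momentMajorant_le hp hp2 hγ ih (Matrix.vecCons 1 c)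
      rw [Fin.sum_univ_succ] at this
      simpa [momentMajorant, hc] using this
  obtain ⟨y, z, c, rfl⟩ : ∃ y z c, b = Matrix.vecCons y (Matrix.vecCons z c) :=
    ⟨Matrix.vecHead b, Matrix.vecHead (Matrix.vecTail b), Matrix.vecTail (Matrix.vecTail b),
      by simp only [Matrix.cons_head_tail]⟩
  have hplus := hall (Matrix.vecCons (y + z) c)
  have hminus := hall (Matrix.vecCons (y - z) c)
  simp only [Fin.sum_univ_succ, Matrix.cons_val_zero, Matrix.cons_val_succ] at hb hplus hminus ⊢
  have hconvex := momentMajorant_half_add_le (q := p / 2) (by linarith) (by linarith)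
    (x := (y + z) ^ 2 + ∑ i, c i ^ 2) (y := (y - z) ^ 2 + ∑ i, c i ^ 2) (by linarith)
  rw [show ((y + z) ^ 2 + ∑ i, c i ^ 2 + ((y - z) ^ 2 + ∑ i, c i ^ 2)) / 2
    = y ^ 2 + (z ^ 2 + ∑ i, c i ^ 2) by ring] at hconvex
  rw [rademacherMoment_merge (by linarith) hp2]
  linarith [mul_le_mul_of_nonneg_left hconvex (gaussianAbsMoment_pos (p := p) (by linarith)).le]

lemma gaussianAbsMoment_mul_momentMajorant_le (hp : 7 / 4 ≤ p) (hp2 : p < 2)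
    (hγ : gaussianAbsMoment p ≤ 2 ^ (p / 2 - 1)) {n : ℕ} (b : Fin n → ℝ) (hb : ∑ i, b i ^ 2 ≤ 1) :
    gaussianAbsMoment p * momentMajorant (p / 2) (∑ i, b i ^ 2)
      ≤ rademacherMoment p (Matrix.vecCons 1 b) := by
  have hp0 : 0 < p := by linarith
  have hbase {x : ℝ} (hx : |x| ≤ 1) :=
    gaussianAbsMoment_mul_momentMajorant_le_of_abs_le_one hp0 hp2.le hγ hx
  induction n using Nat.twoStepInduction with
  | zero => simpa [rademacherMoment_unique] using hbase (x := 0) (by simp)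
  | one =>
    rw [Fin.sum_univ_one] at hb ⊢
    rw [show Matrix.vecCons 1 b = ![1, b 0] by ext i; fin_cases i <;> rfl,
      rademacherMoment_pair hp0 hp2]
    exact hbase ((sq_le_one_iff_abs_le_one _).1 hb)
  | more n _ ih => exact gaussianAbsMoment_mul_momentMajorant_le_succ hp hp2 hγ ih b hb

theorem gaussianAbsMoment_mul_le_rademacherMoment (hp : 7 / 4 ≤ p) (hp2 : p < 2)
    (hγ : gaussianAbsMoment p ≤ 2 ^ (p / 2 - 1)) (a : ι → ℝ) :
    gaussianAbsMoment p * (∑ i, a i ^ 2) ^ (p / 2) ≤ rademacherMoment p a := by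
  rcases isEmpty_or_nonempty ι with hι | hι
  · rw [Finset.univ_eq_empty, Finset.sum_empty, Real.zero_rpow (by linarith), mul_zero]
    exact rademacherMoment_nonneg a
  obtain ⟨n, hn⟩ : ∃ n, Fintype.card ι = n + 1 := Nat.exists_eq_succ_of_ne_zero Fintype.card_ne_zero
  let e := (Fintype.equivFinOfCardEq hn).symm
  have h := gaussianAbsMoment_mul_le_of_momentMajorant_le hp hp2 hγ
    (gaussianAbsMoment_mul_momentMajorant_le hp hp2 hγ) fun i => a (e i)
  rwa [Equiv.sum_comp e fun i => a i ^ 2, rademacherMoment_congr (by linarith) hp2 (b := a)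
    fun u => Equiv.prod_comp e fun i => Real.cos (a i * u)] at h

end Haagerup

section GammaThreshold

lemma Gamma_add_natCast_eq_prod {s : ℝ} (hs : 0 < s) (n : ℕ) :
    Real.Gamma (s + n) = (∏ k ∈ Finset.range n, (s + k)) * Real.Gamma s := by
  induction n with
  | zero => simp
  | succ n ih =>
    rw [Nat.cast_succ, ← add_assoc, Real.Gamma_add_one (by positivity), ih,
      Finset.prod_range_succ_comm, mul_assoc]

lemma Gamma_three_halves : Real.Gamma (3 / 2) = √Real.pi / 2 := by
  rw [show (3 / 2 : ℝ) = 1 / 2 + 1 by norm_num, Real.Gamma_add_one (by norm_num),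
    Real.Gamma_one_half_eq]
  ring

lemma Gamma_three_halves_add_pow_le (x : ℝ) (hx : 0 ≤ x) :
    Real.Gamma (3 / 2 + x) ^ 5 ≤ Real.Gamma (11 / 8 + x) ^ 4 * Real.Gamma (2 + x) := by
  have h := Real.Gamma_mul_add_mul_le_rpow_Gamma_mul_rpow_Gamma (s := 11 / 8 + x) (t := 2 + x)
    (a := 4 / 5) (b := 1 / 5) (by positivity) (by positivity) (by norm_num) (by norm_num)
    (by norm_num)
  rw [show 4 / 5 * (11 / 8 + x) + 1 / 5 * (2 + x) = 3 / 2 + x by ring] at h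
  have hΓ : 0 ≤ Real.Gamma (11 / 8 + x) := Real.Gamma_nonneg_of_nonneg (by positivity)
  have hΓ' : 0 ≤ Real.Gamma (2 + x) := Real.Gamma_nonneg_of_nonneg (by positivity)
  calc Real.Gamma (3 / 2 + x) ^ 5
      ≤ (Real.Gamma (11 / 8 + x) ^ (4 / 5 : ℝ) * Real.Gamma (2 + x) ^ (1 / 5 : ℝ)) ^ 5 := by
        gcongr
    _ = _ := by
        rw [mul_pow, ← Real.rpow_mul_natCast hΓ, ← Real.rpow_mul_natCast hΓ']
        norm_num

lemma prod_range_fourteen_lt :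
    (∏ k ∈ Finset.range 14, (11 / 8 + (k : ℝ))) ^ 4 * ∏ k ∈ Finset.range 14, (2 + (k : ℝ))
      < (∏ k ∈ Finset.range 14, (3 / 2 + (k : ℝ))) ^ 5 * 0.88621 := by
  norm_num [Finset.prod_range_succ]

lemma Gamma_three_halves_le_Gamma_eleven_eighths :
    Real.Gamma (3 / 2) ≤ Real.Gamma (11 / 8) := by
  have hlogconvex := Gamma_three_halves_add_pow_le (14 : ℕ) (by positivity)
  rw [Gamma_add_natCast_eq_prod (by norm_num), Gamma_add_natCast_eq_prod (by norm_num),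
    Gamma_add_natCast_eq_prod (by norm_num), Real.Gamma_two, mul_one] at hlogconvex
  have hΓ : 0.88621 ≤ Real.Gamma (3 / 2) := by
    rw [Gamma_three_halves, le_div_iff₀ two_pos]
    exact Real.le_sqrt_of_sq_le (by linarith [Real.pi_gt_d4])
  have hΓ' : 0 < Real.Gamma (11 / 8) := Real.Gamma_pos_of_pos (by norm_num)
  by_contra! hlt
  refine hlogconvex.not_gt ?_
  generalize Real.Gamma (3 / 2) = x at *
  generalize Real.Gamma (11 / 8) = y at *
  calc ((∏ k ∈ Finset.range 14, (11 / 8 + (k : ℝ))) * y) ^ 4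
        * ∏ k ∈ Finset.range 14, (2 + (k : ℝ))
      = (∏ k ∈ Finset.range 14, (11 / 8 + (k : ℝ))) ^ 4
        * (∏ k ∈ Finset.range 14, (2 + (k : ℝ))) * y ^ 4 := by ring
    _ ≤ (∏ k ∈ Finset.range 14, (11 / 8 + (k : ℝ))) ^ 4
        * (∏ k ∈ Finset.range 14, (2 + (k : ℝ))) * x ^ 4 := by gcongr
    _ < (∏ k ∈ Finset.range 14, (3 / 2 + (k : ℝ))) ^ 5 * 0.88621 * x ^ 4 :=
        mul_lt_mul_of_pos_right prod_range_fourteen_lt (by positivity)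
    _ ≤ (∏ k ∈ Finset.range 14, (3 / 2 + (k : ℝ))) ^ 5 * x * x ^ 4 := by gcongr
    _ = _ := by ring

lemma eulerMascheroniConstant_add_two_mul_log_two_lt :
    Real.eulerMascheroniConstant + 2 * Real.log 2 < 2 := by
  have h := Real.eulerMascheroniConstant_lt_eulerMascheroniSeq' 16
  have hlog : Real.log 16 = 4 * Real.log 2 := by
    rw [show (16 : ℝ) = 2 ^ 4 by norm_num, Real.log_pow]
    norm_num
  have hharmonic : ((harmonic 16 : ℚ) : ℝ) < 3.381 := by
    norm_num [harmonic, Finset.sum_range_succ]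
  rw [Real.eulerMascheroniSeq', if_neg (by norm_num), Nat.cast_ofNat, hlog] at h
  linarith [Real.log_two_gt_d9]

lemma exists_Gamma_lt_Gamma_three_halves :
    ∃ t ∈ Ioo (11 / 8 : ℝ) (3 / 2), Real.Gamma t < Real.Gamma (3 / 2) := by
  have hderiv := (hasDerivAt_id (1 / 2 : ℝ)).mul Real.hasDerivAt_Gamma_one_half
  have hpos : 0 < 1 * Real.Gamma (1 / 2)
      + id (1 / 2 : ℝ) * (-√Real.pi * (Real.eulerMascheroniConstant + 2 * Real.log 2)) := by
    rw [Real.Gamma_one_half_eq, id]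
    nlinarith [eulerMascheroniConstant_add_two_mul_log_two_lt, Real.sqrt_pos.2 Real.pi_pos]
  have hslope := ((hasDerivAt_iff_tendsto_slope_left_right.1 hderiv).1.eventually_const_lt hpos).and
    (Ioo_mem_nhdsLT (show (3 / 8 : ℝ) < 1 / 2 by norm_num))
  obtain ⟨x, hx, hx₁, hx₂⟩ := hslope.exists
  rw [slope_def_field, Pi.mul_apply, Pi.mul_apply, id, id, ← Real.Gamma_add_one (by linarith),
    ← Real.Gamma_add_one (by norm_num)] at hx
  refine ⟨x + 1, ⟨by linarith, by linarith⟩, ?_⟩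
  rw [show (3 / 2 : ℝ) = 1 / 2 + 1 by norm_num]
  by_contra! h
  exact hx.not_ge (div_nonpos_of_nonneg_of_nonpos (by linarith) (by linarith))

lemma exists_Gamma_eq_Gamma_three_halves :
    ∃ t ∈ Ico (11 / 8 : ℝ) (3 / 2), Real.Gamma t = Real.Gamma (3 / 2) := by
  obtain ⟨t, ⟨ht₁, ht₂⟩, ht⟩ := exists_Gamma_lt_Gamma_three_halves
  have hcont : ContinuousOn Real.Gamma (Icc (11 / 8) t) := fun s hs =>
    (Real.differentiableAt_Gamma fun m => by
      linarith [hs.1, m.cast_nonneg (α := ℝ)]).continuousAt.continuousWithinAt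
  obtain ⟨s, hs, hsΓ⟩ := intermediate_value_Icc' ht₁.le hcont
    ⟨ht.le, Gamma_three_halves_le_Gamma_eleven_eighths⟩
  exact ⟨s, ⟨hs.1, hs.2.trans_lt ht₂⟩, hsΓ⟩

lemma gaussianAbsMoment_eq_mul_Gamma_div {p : ℝ} (hp : -1 < p) :
    gaussianAbsMoment p
      = 2 ^ (p / 2 - 1) * (Real.Gamma ((p + 1) / 2) / Real.Gamma (3 / 2)) := by
  rw [gaussianAbsMoment_eq hp, Gamma_three_halves, Real.rpow_sub_one two_ne_zero]
  field_simp

lemma exists_gaussianAbsMoment_eq : ∃ p ∈ Ico (7 / 4 : ℝ) 2,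
    gaussianAbsMoment p = 2 ^ (p / 2 - 1) ∧
      ∀ r ∈ Ico p 2, gaussianAbsMoment r ≤ 2 ^ (r / 2 - 1) := by
  obtain ⟨t, ⟨ht₁, ht₂⟩, htΓ⟩ := exists_Gamma_eq_Gamma_three_halves
  have hΓ : 0 < Real.Gamma (3 / 2) := Real.Gamma_pos_of_pos (by norm_num)
  refine ⟨2 * t - 1, ⟨by linarith, by linarith⟩, ?_, fun r hr => ?_⟩
  · rw [gaussianAbsMoment_eq_mul_Gamma_div (by linarith), show (2 * t - 1 + 1) / 2 = t by ring, htΓ,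
      div_self hΓ.ne', mul_one]
  · rw [gaussianAbsMoment_eq_mul_Gamma_div (by linarith [hr.1])]
    refine mul_le_of_le_one_right (by positivity) ((div_le_one hΓ).2 ?_)
    have hconvex := Real.convexOn_Gamma.le_max_of_mem_Icc (x := t) (y := 3 / 2)
      (z := (r + 1) / 2) (show 0 < t by linarith) (show (0 : ℝ) < 3 / 2 by norm_num)
      ⟨by linarith [hr.1], by linarith [hr.2]⟩
    rwa [htΓ, max_self] at hconvex

end GammaThreshold

section Khintchine

variable {ι : Type*} [Fintype ι] [DecidableEq ι] {p r : ℝ}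

lemma rademacherMoment_interpolate {p₀ p₁ θ : ℝ} (hp₀ : 0 < p₀) (hp₁ : 0 < p₁) (hθ₀ : 0 ≤ θ)
    (hθ₁ : θ ≤ 1) (a : ι → ℝ) :
    rademacherMoment (θ * p₀ + (1 - θ) * p₁) a
      ≤ θ * rademacherMoment p₀ a + (1 - θ) * rademacherMoment p₁ a := by
  simp only [rademacherMoment, Finset.mul_expect, ← Finset.expect_add_distrib]
  refine Finset.expect_le_expect fun ε _ => ?_
  have hx := abs_nonneg (∑ i, ((ε i : ℤ) : ℝ) * a i)
  rw [Real.rpow_add_of_nonneg hx (by positivity) (mul_nonneg (sub_nonneg.2 hθ₁) hp₁.le), mul_comm θ,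
    mul_comm (1 - θ), Real.rpow_mul hx, Real.rpow_mul hx]
  exact Real.geom_mean_le_arith_mean2_weighted hθ₀ (sub_nonneg.2 hθ₁) (by positivity)
    (by positivity) (add_sub_cancel θ 1)

lemma half_le_rademacherMoment_of_le (hp0 : 0 < p) (hpr : p ≤ r) (hr2 : r < 2) {a : ι → ℝ}
    (ha : ∑ i, a i ^ 2 = 1 / 2) (hr : 1 / 2 ≤ rademacherMoment r a) :
    1 / 2 ≤ rademacherMoment p a := by
  have hθ : 0 < (2 - r) / (2 - p) := div_pos (by linarith) (by linarith)
  have hinterpolate := rademacherMoment_interpolate hp0 two_pos hθ.le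
    ((div_le_one (by linarith)).2 (by linarith)) a
  have hexp : (2 - r) / (2 - p) * p + (1 - (2 - r) / (2 - p)) * 2 = r := by
    field_simp [show (2 - p) ≠ 0 by linarith]
    ring
  rw [hexp, rademacherMoment_two, ha] at hinterpolate
  refine le_of_mul_le_mul_left ?_ hθ
  linarith

lemma two_rpow_mul_le_rademacherMoment_of_le (hp0 : 0 < p) (hpr : p ≤ r) (hr2 : r < 2) {a : ι → ℝ}
    (hr : 2 ^ (r / 2 - 1) * (∑ i, a i ^ 2) ^ (r / 2) ≤ rademacherMoment r a) :
    2 ^ (p / 2 - 1) * (∑ i, a i ^ 2) ^ (p / 2) ≤ rademacherMoment p a := by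
  obtain ⟨v, hv⟩ : ∃ v, ∑ i, a i ^ 2 = v := ⟨_, rfl⟩
  rw [hv] at hr ⊢
  rcases (hv ▸ Finset.sum_nonneg fun i _ => sq_nonneg (a i) : 0 ≤ v).eq_or_lt with h0 | hv0
  · rw [← h0, Real.zero_rpow (by linarith), mul_zero]
    exact rademacherMoment_nonneg a
  have hnormalize : ∀ s, 2 ^ (s / 2 - 1) * v ^ (s / 2) ≤ rademacherMoment s a
      ↔ 1 / 2 ≤ rademacherMoment s fun i => (√(2 * v))⁻¹ * a i := fun s => by
    rw [rademacherMoment_mul, abs_inv, Real.inv_rpow (abs_nonneg _), abs_rpow_eq_sq_rpow,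
      Real.sq_sqrt (by positivity), Real.rpow_sub_one two_ne_zero,
      Real.mul_rpow zero_le_two hv0.le, le_inv_mul_iff₀ (by positivity)]
    ring_nf
  rw [hnormalize] at hr ⊢
  refine half_le_rademacherMoment_of_le hp0 hpr hr2 ?_ hr
  simp only [mul_pow, ← Finset.mul_sum, hv, inv_pow]
  rw [Real.sq_sqrt (by positivity)]
  field_simp

theorem min_mul_le_rademacherMoment (hp0 : 0 < p) (hp2 : p < 2) (a : ι → ℝ) :
    min (2 ^ (p / 2 - 1)) (gaussianAbsMoment p) * (∑ i, a i ^ 2) ^ (p / 2)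
      ≤ rademacherMoment p a := by
  have hv : 0 ≤ (∑ i, a i ^ 2) ^ (p / 2) :=
    Real.rpow_nonneg (Finset.sum_nonneg fun i _ => sq_nonneg (a i)) _
  obtain ⟨r, ⟨hr₁, hr₂⟩, hrγ, hγ⟩ := exists_gaussianAbsMoment_eq
  rcases le_total r p with hrp | hpr
  · exact (mul_le_mul_of_nonneg_right (min_le_right _ _) hv).trans
      (gaussianAbsMoment_mul_le_rademacherMoment (hr₁.trans hrp) hp2 (hγ p ⟨hrp, hp2⟩) a)
  · refine (mul_le_mul_of_nonneg_right (min_le_left _ _) hv).trans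
      (two_rpow_mul_le_rademacherMoment_of_le hp0 hpr hr₂ ?_)
    rw [← hrγ]
    exact gaussianAbsMoment_mul_le_rademacherMoment hr₁ hr₂ hrγ.le a

lemma khintchineA_pos (hp : -1 < p) : 0 < khintchineA p := by
  have : 0 < Real.Gamma ((p + 1) / 2) := Real.Gamma_pos_of_pos (by linarith)
  exact lt_min (lt_min one_pos (by positivity)) (by positivity)

lemma khintchineA_rpow_le (hp0 : 0 < p) :
    khintchineA p ^ p ≤ min (2 ^ (p / 2 - 1)) (gaussianAbsMoment p) := by
  have hA := (khintchineA_pos (p := p) (by linarith)).le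
  have : 0 < Real.Gamma ((p + 1) / 2) := Real.Gamma_pos_of_pos (by linarith)
  refine le_min ?_ ?_
  · calc khintchineA p ^ p ≤ (2 ^ (1 / 2 - 1 / p : ℝ)) ^ p :=
          Real.rpow_le_rpow hA ((min_le_left _ _).trans (min_le_right _ _)) hp0.le
      _ = 2 ^ (p / 2 - 1) := by
          rw [← Real.rpow_mul zero_le_two]
          field_simp
  · calc khintchineA p ^ p
        ≤ (2 ^ (1 / 2 : ℝ) * (Real.Gamma ((p + 1) / 2) / √Real.pi) ^ (1 / p)) ^ p :=
          Real.rpow_le_rpow hA (min_le_right _ _) hp0.le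
      _ = gaussianAbsMoment p := by
          rw [gaussianAbsMoment_eq (by linarith), Real.mul_rpow (by positivity) (by positivity),
            ← Real.rpow_mul zero_le_two, ← Real.rpow_mul (by positivity),
            one_div_mul_cancel hp0.ne', Real.rpow_one, one_div_mul_eq_div]

theorem khintchineA_rpow_mul_le_rademacherMoment (hp0 : 0 < p) (hp2 : p < 2) (a : ι → ℝ) :
    khintchineA p ^ p * (∑ i, a i ^ 2) ^ (p / 2) ≤ rademacherMoment p a :=
  (mul_le_mul_of_nonneg_right (khintchineA_rpow_le hp0)
    (Real.rpow_nonneg (Finset.sum_nonneg fun i _ => sq_nonneg (a i)) _)).trans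
    (min_mul_le_rademacherMoment hp0 hp2 a)

end Khintchine

section LpBall

/-- The unit ball `{x | ‖x‖_p ≤ 1}` of `ℓ^p` over a finite index type, for a finite exponent `p`. -/
def lpBall {ι : Type*} [Fintype ι] (p : ℝ) : Set (ι → ℝ) :=
  {x | ∑ i, |x i| ^ p ≤ 1}

/-- The polar body of `lpBall s`, that is, the unit ball of `ℓ^q` for the conjugate exponent `q` of
`s`, including the case `s = 1`, `q = ∞`. -/
def lpPolar {ι : Type*} [Fintype ι] (s : ℝ) : Set (ι → ℝ) :=
  {x | ∀ w ∈ lpBall s, w ⬝ᵥ x ≤ 1}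

/-- The duality map `y ↦ sign y * |y| ^ (s - 1)` of `ℓ^s`, acting coordinatewise. -/
noncomputable def lpDualVector {ι : Type*} (s : ℝ) (y : ι → ℝ) : ι → ℝ :=
  fun i => SignType.sign (y i) * |y i| ^ (s - 1)

lemma abs_lpDualVector_le {ι : Type*} (s : ℝ) (y : ι → ℝ) (i : ι) :
    |lpDualVector s y i| ≤ |y i| ^ (s - 1) := by
  rw [lpDualVector, abs_mul, abs_of_nonneg (a := |y i| ^ (s - 1)) (by positivity)]
  refine mul_le_of_le_one_left (by positivity) ?_
  rcases lt_trichotomy (y i) 0 with h | h | h <;> simp [h]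

variable {ι : Type*} [Fintype ι] {p q s : ℝ}

lemma single_mem_lpBall [DecidableEq ι] (hp : p ≠ 0) (i : ι) {c : ℝ} (hc : |c| = 1) :
    Pi.single i c ∈ lpBall p := by
  simp [lpBall, Pi.single_apply, apply_ite, ite_pow, hc, Real.zero_rpow hp]

lemma abs_le_one_of_mem_lpBall (hp : 0 < p) {x : ι → ℝ} (hx : x ∈ lpBall p) (i : ι) :
    |x i| ≤ 1 := by
  have hterm : |x i| ^ p ≤ 1 :=
    (Finset.single_le_sum (f := fun i => |x i| ^ p) (fun j _ => by positivity)
      (Finset.mem_univ i)).trans hx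
  contrapose! hterm
  exact Real.one_lt_rpow hterm hp

lemma abs_le_one_of_mem_lpPolar (hs : s ≠ 0) {x : ι → ℝ} (hx : x ∈ lpPolar s) (i : ι) :
    |x i| ≤ 1 := by
  classical
  refine abs_le'.2 ⟨?_, ?_⟩
  · simpa using hx _ (single_mem_lpBall hs i abs_one)
  · simpa using hx _ (single_mem_lpBall hs i (c := -1) (by simp))

lemma sum_inv_card_le_one : ∑ _i : ι, (Fintype.card ι : ℝ)⁻¹ ≤ 1 := by
  simpa using mul_inv_le_one

lemma inv_card_smul_mem_lpBall (hp : 1 ≤ p) {x : ι → ℝ} (hx : ∀ i, |x i| ≤ 1) :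
    (Fintype.card ι : ℝ)⁻¹ • x ∈ lpBall p := by
  refine (Finset.sum_le_sum fun i _ => ?_).trans sum_inv_card_le_one
  have hle : |((Fintype.card ι : ℝ)⁻¹ • x) i| ≤ (Fintype.card ι : ℝ)⁻¹ := by
    rw [Pi.smul_apply, smul_eq_mul, abs_mul, abs_of_nonneg (by positivity)]
    exact mul_le_of_le_one_right (by positivity) (hx i)
  exact (Real.rpow_le_self_of_le_one (abs_nonneg _) (hle.trans (Nat.cast_inv_le_one _)) hp).trans
    hle

lemma inv_card_smul_mem_lpPolar (hs : 0 < s) {x : ι → ℝ} (hx : ∀ i, |x i| ≤ 1) :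
    (Fintype.card ι : ℝ)⁻¹ • x ∈ lpPolar s := by
  intro w hw
  refine (Finset.sum_le_sum fun i _ => ?_).trans sum_inv_card_le_one
  calc w i * ((Fintype.card ι : ℝ)⁻¹ • x) i = (Fintype.card ι : ℝ)⁻¹ * (w i * x i) := by
        rw [Pi.smul_apply, smul_eq_mul]; ring
    _ ≤ (Fintype.card ι : ℝ)⁻¹ := by
        refine mul_le_of_le_one_right (by positivity) ((le_abs_self _).trans ?_)
        rw [abs_mul]
        exact mul_le_one₀ (abs_le_one_of_mem_lpBall hs hw i) (abs_nonneg _) (hx i)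

lemma dotProduct_lpDualVector (hs : s ≠ 0) (y : ι → ℝ) :
    y ⬝ᵥ lpDualVector s y = ∑ i, |y i| ^ s := by
  refine Finset.sum_congr rfl fun i _ => ?_
  rw [lpDualVector, ← mul_assoc, self_mul_sign, ← Real.rpow_one_add' (abs_nonneg _) (by simpa),
    add_sub_cancel]

lemma lpDualVector_mem_lpPolar (hs : 1 ≤ s) {y : ι → ℝ} (hy : y ∈ lpBall s) :
    lpDualVector s y ∈ lpPolar s := by
  have hs0 : s ≠ 0 := by positivity
  have hs' : 0 ≤ 1 - 1 / s := sub_nonneg.2 ((div_le_one (by positivity)).2 hs)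
  intro w hw
  have hyoung : ∀ i, w i * lpDualVector s y i ≤ 1 / s * |w i| ^ s + (1 - 1 / s) * |y i| ^ s := by
    intro i
    calc w i * lpDualVector s y i ≤ |w i| * |y i| ^ (s - 1) := by
          refine (le_abs_self _).trans ?_
          rw [abs_mul]
          gcongr
          exact abs_lpDualVector_le s y i
      _ = (|w i| ^ s) ^ (1 / s) * (|y i| ^ s) ^ (1 - 1 / s) := by
          rw [← Real.rpow_mul (abs_nonneg _), ← Real.rpow_mul (abs_nonneg _),
            mul_one_div_cancel hs0, Real.rpow_one, mul_one_sub, mul_one_div_cancel hs0]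
      _ ≤ 1 / s * |w i| ^ s + (1 - 1 / s) * |y i| ^ s :=
          Real.geom_mean_le_arith_mean2_weighted (by positivity) hs' (by positivity)
            (by positivity) (by ring)
  calc w ⬝ᵥ lpDualVector s y ≤ 1 / s * ∑ i, |w i| ^ s + (1 - 1 / s) * ∑ i, |y i| ^ s := by
        rw [Finset.mul_sum, Finset.mul_sum, ← Finset.sum_add_distrib]
        exact Finset.sum_le_sum fun i _ => hyoung i
    _ ≤ 1 / s * 1 + (1 - 1 / s) * 1 := by gcongr <;> assumption
    _ = 1 := by ring

lemma lpDualVector_mem_lpBall (hpq : p.HolderConjugate q) {y : ι → ℝ} (hy : y ∈ lpBall q) :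
    lpDualVector q y ∈ lpBall p := by
  refine (Finset.sum_le_sum fun i _ => ?_).trans (show ∑ i, |y i| ^ q ≤ 1 from hy)
  calc |lpDualVector q y i| ^ p ≤ (|y i| ^ (q - 1)) ^ p := by
        gcongr
        · exact hpq.nonneg
        · exact abs_lpDualVector_le q y i
    _ = |y i| ^ q := by
        rw [← Real.rpow_mul (abs_nonneg _), hpq.symm.sub_one_mul_conj]

lemma sum_abs_rpow_neg_smul_eq_one (hs : s ≠ 0) {x : ι → ℝ} (hx : 0 < ∑ i, |x i| ^ s) :
    ∑ i, |((∑ i, |x i| ^ s) ^ (-(1 / s)) • x) i| ^ s = 1 := by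
  set S := ∑ i, |x i| ^ s with hS
  have hc : (0 : ℝ) < S ^ (-(1 / s)) := by positivity
  simp only [Pi.smul_apply, smul_eq_mul, abs_mul, abs_of_pos hc,
    Real.mul_rpow hc.le (abs_nonneg _), ← Finset.mul_sum, ← hS]
  rw [← Real.rpow_mul hx.le, neg_mul, one_div_mul_cancel hs, Real.rpow_neg_one,
    inv_mul_cancel₀ hx.ne']

lemma mem_lpBall_of_forall_lpDualVector (hs : 0 < s) {x : ι → ℝ}
    (hx : ∀ y ∈ lpBall s, x ⬝ᵥ lpDualVector s y ≤ 1) : x ∈ lpBall s := by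
  by_contra! hS
  replace hS : 1 < ∑ i, |x i| ^ s := not_le.1 hS
  set c : ℝ := (∑ i, |x i| ^ s) ^ (-(1 / s))
  have hnormed : ∑ i, |(c • x) i| ^ s = 1 :=
    sum_abs_rpow_neg_smul_eq_one hs.ne' (one_pos.trans hS)
  have hpair : c * (x ⬝ᵥ lpDualVector s (c • x)) = 1 := by
    rw [← smul_eq_mul, ← smul_dotProduct, dotProduct_lpDualVector hs.ne', hnormed]
  have hc1 : c < 1 := Real.rpow_lt_one_of_one_lt_of_neg hS (by simpa using hs)
  exact (mul_le_of_le_one_right (by positivity) (hx _ hnormed.le)).not_gt (hpair ▸ hc1)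

lemma mem_lpBall_of_forall_mem_lpPolar (hs : 1 ≤ s) {x : ι → ℝ}
    (hx : ∀ z ∈ lpPolar s, x ⬝ᵥ z ≤ 1) : x ∈ lpBall s :=
  mem_lpBall_of_forall_lpDualVector (by linarith) fun _ hy => hx _ (lpDualVector_mem_lpPolar hs hy)

lemma lpPolar_eq_lpBall (hpq : p.HolderConjugate q) : lpPolar (ι := ι) p = lpBall q := by
  refine Subset.antisymm (fun x hx => ?_) fun x hx w hw => ?_
  · refine mem_lpBall_of_forall_lpDualVector hpq.symm.pos fun y hy => ?_
    rw [dotProduct_comm]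
    exact hx _ (lpDualVector_mem_lpBall hpq hy)
  · calc w ⬝ᵥ x ≤ (∑ i, |w i| ^ p) ^ (1 / p) * (∑ i, |x i| ^ q) ^ (1 / q) :=
          Real.inner_le_Lp_mul_Lq Finset.univ w x hpq
      _ ≤ 1 := mul_le_one₀ (Real.rpow_le_one (by positivity) hw hpq.one_div_nonneg) (by positivity)
          (Real.rpow_le_one (by positivity) hx hpq.symm.one_div_nonneg)

lemma lpPolar_one : lpPolar (ι := ι) 1 = {x | ∀ i, |x i| ≤ 1} := by
  refine Subset.antisymm (fun x hx => abs_le_one_of_mem_lpPolar one_ne_zero hx) fun x hx w hw => ?_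
  refine (Finset.sum_le_sum fun i _ => ?_).trans hw
  rw [Real.rpow_one]
  refine (le_abs_self _).trans ?_
  rw [abs_mul]
  exact mul_le_of_le_one_right (abs_nonneg _) (hx i)

end LpBall

section BanachMazur

variable {ι κ : Type*} [Fintype ι] [Fintype κ] {p r s : ℝ}

lemma const_mul_sign_mem_lpPolar (hs : 1 ≤ s) (ε : ι → ℤˣ) :
    (fun i => (Fintype.card ι : ℝ) ^ (1 / s - 1) * ((ε i : ℤ) : ℝ)) ∈ lpPolar s := by
  cases isEmpty_or_nonempty ι
  · exact fun w _ => by simp [dotProduct]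
  have hn : (0 : ℝ) < Fintype.card ι := by exact_mod_cast Fintype.card_pos
  set y : ι → ℝ := fun i => (Fintype.card ι : ℝ) ^ (-(1 / s)) * ((ε i : ℤ) : ℝ)
  have habs : ∀ i, |y i| = (Fintype.card ι : ℝ) ^ (-(1 / s)) := fun i => by
    rw [abs_mul, abs_unit_intCast, mul_one, abs_of_pos (by positivity)]
  have hy : y ∈ lpBall s := by
    simp only [lpBall, mem_ofPred_eq, habs, ← Real.rpow_mul hn.le, neg_mul,
      one_div_mul_cancel (by positivity : s ≠ 0), Real.rpow_neg_one]
    exact sum_inv_card_le_one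
  convert lpDualVector_mem_lpPolar hs hy using 2 with i
  have hsign : (SignType.sign (y i) : ℝ) = ((ε i : ℤ) : ℝ) := by
    rcases Int.units_eq_one_or (ε i) with h | h <;>
      simp [y, h, Real.rpow_pos_of_pos hn, sign_pos]
  rw [lpDualVector, hsign, habs, ← Real.rpow_mul hn.le, mul_comm]
  congr 2
  field_simp
  ring

lemma sum_abs_rpow_le_card_rpow_mul (hp0 : 0 < p) (hp2 : p ≤ 2) (a : ι → ℝ) :
    ∑ i, |a i| ^ p ≤ (Fintype.card ι : ℝ) ^ (1 - p / 2) * (∑ i, a i ^ 2) ^ (p / 2) := by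
  have hmean : (∑ i, |a i| ^ p) ^ (2 / p) ≤
      (Fintype.card ι : ℝ) ^ (2 / p - 1) * ∑ i, a i ^ 2 := by
    have h := Real.rpow_sum_le_const_mul_sum_rpow Finset.univ (fun i => |a i| ^ p)
      ((one_le_div hp0).2 hp2)
    simpa [abs_of_nonneg, Real.rpow_nonneg, ← Real.rpow_mul, mul_div_cancel₀, hp0.ne'] using h
  calc ∑ i, |a i| ^ p = ((∑ i, |a i| ^ p) ^ (2 / p)) ^ (p / 2) := by
        rw [← Real.rpow_mul (by positivity), div_mul_div_cancel₀ hp0.ne', div_self two_ne_zero,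
          Real.rpow_one]
    _ ≤ ((Fintype.card ι : ℝ) ^ (2 / p - 1) * ∑ i, a i ^ 2) ^ (p / 2) := by gcongr
    _ = (Fintype.card ι : ℝ) ^ (1 - p / 2) * (∑ i, a i ^ 2) ^ (p / 2) := by
        rw [Real.mul_rpow (by positivity) (by positivity), ← Real.rpow_mul (by positivity)]
        congr 2
        field_simp

lemma sum_abs_sum_sign_mul_rpow_le [Nonempty ι] (hs : 1 ≤ s)
    {M : Matrix κ ι ℝ} (hM : ∀ x ∈ lpPolar s, M.mulVec x ∈ lpBall p) (ε : ι → ℤˣ) :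
    ∑ k, |∑ i, ((ε i : ℤ) : ℝ) * M k i| ^ p ≤ (Fintype.card ι : ℝ) ^ ((1 - 1 / s) * p) := by
  have hn : (0 : ℝ) < Fintype.card ι := by exact_mod_cast Fintype.card_pos
  set c : ℝ := (Fintype.card ι : ℝ) ^ (1 / s - 1) with hc
  have hc0 : 0 < c := by positivity
  have hmul : ∀ k, M.mulVec (fun i => c * ((ε i : ℤ) : ℝ)) k =
      c * ∑ i, ((ε i : ℤ) : ℝ) * M k i := fun k => by
    rw [Finset.mul_sum]
    exact Finset.sum_congr rfl fun i _ => by ring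
  have hle : c ^ p * ∑ k, |∑ i, ((ε i : ℤ) : ℝ) * M k i| ^ p ≤ 1 := by
    have h := hM _ (const_mul_sign_mem_lpPolar hs ε)
    simpa only [lpBall, mem_ofPred_eq, ← hc, hmul, abs_mul, abs_of_pos hc0,
      Real.mul_rpow hc0.le (abs_nonneg _), ← Finset.mul_sum] using h
  have hcp : (Fintype.card ι : ℝ) ^ ((1 - 1 / s) * p) = (c ^ p)⁻¹ := by
    rw [hc, ← Real.rpow_mul hn.le, ← Real.rpow_neg hn.le, neg_mul_eq_neg_mul, neg_sub]
  rwa [hcp, ← one_div, le_div_iff₀' (by positivity)]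

lemma khintchineA_rpow_mul_sum_le [Nonempty ι] (hp0 : 0 < p) (hp2 : p < 2)
    (hs : 1 ≤ s) {M : Matrix κ ι ℝ} (hM : ∀ x ∈ lpPolar s, M.mulVec x ∈ lpBall p) :
    khintchineA p ^ p * ∑ k, (∑ i, M k i ^ 2) ^ (p / 2) ≤
      (Fintype.card ι : ℝ) ^ ((1 - 1 / s) * p) := by
  classical
  calc khintchineA p ^ p * ∑ k, (∑ i, M k i ^ 2) ^ (p / 2)
      ≤ ∑ k, rademacherMoment p (M k) := by
        rw [Finset.mul_sum]
        exact Finset.sum_le_sum fun k _ =>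
          khintchineA_rpow_mul_le_rademacherMoment hp0 hp2 (M k)
    _ = 𝔼 ε : ι → ℤˣ, ∑ k, |∑ i, ((ε i : ℤ) : ℝ) * M k i| ^ p :=
        (Finset.expect_sum_comm _ _ _).symm
    _ ≤ (Fintype.card ι : ℝ) ^ ((1 - 1 / s) * p) :=
        Finset.expect_le Finset.univ_nonempty fun ε _ => sum_abs_sum_sign_mul_rpow_le hs hM ε

lemma one_le_rpow_mul_sum_abs_rpow_col [DecidableEq ι] (hp : 0 < p) (hs : s ≠ 0)
    {M : Matrix κ ι ℝ} {N : Matrix ι κ ℝ} (hNM : N * M = 1)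
    (hN : ∀ z ∈ lpBall p, ∀ w ∈ lpBall s, w ⬝ᵥ N.mulVec z ≤ r) (i : ι) :
    1 ≤ r ^ p * ∑ k, |M k i| ^ p := by
  have hcol : N.mulVec (M.col i) = Pi.single i 1 := by
    rw [← Matrix.mulVec_single_one, Matrix.mulVec_mulVec, hNM, Matrix.one_mulVec]
  have hS : 0 < ∑ k, |M k i| ^ p := by
    refine (Finset.sum_nonneg fun k _ => by positivity).lt_of_ne' fun h => ?_
    have hzero : M.col i = 0 := by
      funext k
      simpa [Real.rpow_eq_zero, hp.ne'] using
        (Finset.sum_eq_zero_iff_of_nonneg fun k _ => by positivity).1 h k (Finset.mem_univ k)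
    simpa [hzero] using congrFun hcol i
  set S := ∑ k, |M k i| ^ p
  have hle : S ^ (-(1 / p)) ≤ r := by
    have h := hN _ (sum_abs_rpow_neg_smul_eq_one (x := M.col i) hp.ne' hS).le _
      (single_mem_lpBall hs i abs_one)
    simpa [Matrix.mulVec_smul, hcol] using h
  calc 1 = (S ^ (-(1 / p))) ^ p * S := by
        rw [← Real.rpow_mul hS.le, neg_mul, one_div_mul_cancel hp.ne', Real.rpow_neg_one,
          inv_mul_cancel₀ hS.ne']
    _ ≤ r ^ p * S := by gcongr

lemma khintchineA_mul_card_rpow_le [DecidableEq ι] [Nonempty ι] (hp0 : 0 < p) (hp2 : p < 2)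
    (hs : 1 ≤ s) (hr : 0 ≤ r) {M : Matrix κ ι ℝ} {N : Matrix ι κ ℝ} (hNM : N * M = 1)
    (hM : ∀ x ∈ lpPolar s, M.mulVec x ∈ lpBall p)
    (hN : ∀ z ∈ lpBall p, ∀ w ∈ lpBall s, w ⬝ᵥ N.mulVec z ≤ r) :
    khintchineA p * (Fintype.card ι : ℝ) ^ (1 / s - 1 / 2) ≤ r := by
  set n : ℝ := (Fintype.card ι : ℝ) with hn
  have hn0 : 0 < n := Nat.cast_pos.2 Fintype.card_pos
  have hA := khintchineA_pos (show -1 < p by linarith)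
  have hcols : n ≤ r ^ p * ∑ i, ∑ k, |M k i| ^ p := by
    rw [Finset.mul_sum]
    calc n = ∑ _i : ι, (1 : ℝ) := by simp [hn]
      _ ≤ ∑ i, r ^ p * ∑ k, |M k i| ^ p := Finset.sum_le_sum fun i _ =>
          one_le_rpow_mul_sum_abs_rpow_col hp0 (by positivity) hNM hN i
  have hrows : ∑ i, ∑ k, |M k i| ^ p ≤ n ^ (1 - p / 2) * ∑ k, (∑ i, M k i ^ 2) ^ (p / 2) := by
    rw [Finset.sum_comm, Finset.mul_sum]
    exact Finset.sum_le_sum fun k _ => sum_abs_rpow_le_card_rpow_mul hp0 hp2.le (M k)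
  have hexp : n ^ (1 - p / 2) * n ^ ((1 - 1 / s) * p) * (n ^ (1 / s - 1 / 2)) ^ p = n := by
    rw [← Real.rpow_mul hn0.le, ← Real.rpow_add hn0, ← Real.rpow_add hn0]
    convert Real.rpow_one n using 2
    ring
  have hpow : khintchineA p ^ p * n ≤ r ^ p * (n ^ (1 - p / 2) * n ^ ((1 - 1 / s) * p)) :=
    calc khintchineA p ^ p * n
        ≤ khintchineA p ^ p *
            (r ^ p * (n ^ (1 - p / 2) * ∑ k, (∑ i, M k i ^ 2) ^ (p / 2))) := by
          gcongr
          exact hcols.trans (by gcongr)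
      _ = r ^ p * (n ^ (1 - p / 2) *
            (khintchineA p ^ p * ∑ k, (∑ i, M k i ^ 2) ^ (p / 2))) := by ring
      _ ≤ _ := by
          gcongr
          exact khintchineA_rpow_mul_sum_le hp0 hp2 hs hM
  rw [← Real.rpow_le_rpow_iff (by positivity) hr hp0, Real.mul_rpow hA.le (by positivity)]
  refine le_of_mul_le_mul_right ?_ (show 0 < n ^ (1 - p / 2) * n ^ ((1 - 1 / s) * p) by positivity)
  calc _ = khintchineA p ^ p *
        (n ^ (1 - p / 2) * n ^ ((1 - 1 / s) * p) * (n ^ (1 / s - 1 / 2)) ^ p) := by ring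
    _ = khintchineA p ^ p * n := by rw [hexp]
    _ ≤ _ := hpow

section Body

variable [Nonempty ι] {T : (ι → ℝ) ≃ₗ[ℝ] (ι → ℝ)}

lemma max_khintchineA_le_of_lpPolar_subset (hp1 : 1 ≤ p) (hp2 : p < 2) (hs1 : 1 ≤ s) (hs2 : s < 2)
    (hr : 0 ≤ r) (hLK : lpPolar s ⊆ T '' lpBall p) (hKL : T '' lpBall p ⊆ r • lpPolar s) :
    max (khintchineA p * (Fintype.card ι : ℝ) ^ (1 / s - 1 / 2))
      (khintchineA s * (Fintype.card ι : ℝ) ^ (1 / p - 1 / 2)) ≤ r := by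
  classical
  set M := LinearMap.toMatrix' (T.symm : (ι → ℝ) →ₗ[ℝ] ι → ℝ)
  set N := LinearMap.toMatrix' (T : (ι → ℝ) →ₗ[ℝ] ι → ℝ)
  have hNM : N * M = 1 := by simp [M, N, ← LinearMap.toMatrix'_comp]
  have hMN : M * N = 1 := by simp [M, N, ← LinearMap.toMatrix'_comp]
  have hM : ∀ x ∈ lpPolar s, M.mulVec x ∈ lpBall p := fun x hx => by
    obtain ⟨y, hy, rfl⟩ := hLK hx
    simpa [M, LinearMap.toMatrix'_mulVec] using hy
  have hN : ∀ z ∈ lpBall p, ∀ w ∈ lpBall s, w ⬝ᵥ N.mulVec z ≤ r := fun z hz w hw => by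
    obtain ⟨y, hy, hyz⟩ := hKL (mem_image_of_mem T hz)
    have hNz : N.mulVec z = r • y := by simpa [N, LinearMap.toMatrix'_mulVec] using hyz.symm
    rw [hNz, dotProduct_smul, smul_eq_mul]
    exact mul_le_of_le_one_right hr (hy w hw)
  refine max_le (khintchineA_mul_card_rpow_le (by linarith) hp2 hs1 hr hNM hM hN)
    (khintchineA_mul_card_rpow_le (M := M.transpose) (N := N.transpose) (by linarith) hs2 hp1 hr
      ?_ (fun x hx => mem_lpBall_of_forall_mem_lpPolar hs1 fun z hz => ?_) fun z hz w hw => ?_)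
  · rw [← Matrix.transpose_mul, hMN, Matrix.transpose_one]
  · rw [Matrix.mulVec_transpose, ← Matrix.dotProduct_mulVec, dotProduct_comm]
    exact hx _ (hM z hz)
  · rw [Matrix.mulVec_transpose, dotProduct_comm, ← Matrix.dotProduct_mulVec]
    exact hN w hw z hz

end Body

lemma max_khintchineA_le_bmDist {n : ℕ} (hn : 0 < n) (hp1 : 1 ≤ p) (hp2 : p < 2) (hs1 : 1 ≤ s)
    (hs2 : s < 2) :
    max (khintchineA p * (n : ℝ) ^ (1 / s - 1 / 2)) (khintchineA s * (n : ℝ) ^ (1 / p - 1 / 2)) ≤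
      bmDist n (lpBall p) (lpPolar s) := by
  have : Nonempty (Fin n) := ⟨⟨0, hn⟩⟩
  refine le_csInf ?_ fun r ⟨hr, T, hLK, hKL⟩ => ?_
  · have hn0 : (n : ℝ) ≠ 0 := Nat.cast_ne_zero.2 hn.ne'
    refine ⟨(n : ℝ) ^ 2, one_le_pow₀ (Nat.one_le_cast.2 hn), .smulOfNeZero ℝ _ (n : ℝ) hn0,
      fun x hx => ⟨(n : ℝ)⁻¹ • x, ?_, by simp [hn0]⟩, ?_⟩
    · simpa using inv_card_smul_mem_lpBall hp1 (abs_le_one_of_mem_lpPolar (by positivity) hx)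
    · rintro _ ⟨y, hy, rfl⟩
      refine ⟨(n : ℝ)⁻¹ • y, ?_, by simp [smul_smul, pow_two, hn0]⟩
      simpa using inv_card_smul_mem_lpPolar (by linarith : 0 < s)
        (abs_le_one_of_mem_lpBall (by linarith) hy)
  · simpa using max_khintchineA_le_of_lpPolar_subset hp1 hp2 hs1 hs2 (by linarith) hLK hKL

end BanachMazur

section ConjugateExponent

variable {q : ℝ≥0∞} {s : ℝ}

lemma conjExponent_mem_Ico_of_two_lt (hq : 2 < q) (hs : 1 / s = 1 - (1 / q).toReal) :
    s ∈ Ico (1 : ℝ) 2 := by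
  have hlt : (1 / q).toReal < 1 / 2 := by
    have h : 1 / q < 1 / 2 := by simpa using ENNReal.inv_lt_inv.2 hq
    simpa using ENNReal.toReal_strict_mono (by simp) h
  have hnonneg : 0 ≤ (1 / q).toReal := ENNReal.toReal_nonneg
  have hpos : 0 < s := one_div_pos.1 (by linarith)
  exact ⟨(div_le_one hpos).1 (by linarith), lt_of_one_div_lt_one_div two_pos (by linarith)⟩

lemma lpPolar_eq_ite {ι : Type*} [Fintype ι] (hq : 1 < q) (hs : 1 / s = 1 - (1 / q).toReal) :
    lpPolar (ι := ι) s =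
      if q = ∞ then {x | ∀ i, |x i| ≤ 1} else {x | ∑ i, |x i| ^ q.toReal ≤ 1} := by
  split_ifs with htop
  · have hs1 : s = 1 := by simpa [htop] using hs
    rw [hs1, lpPolar_one]
  · have hconj : q.toReal.HolderConjugate s := by
      rw [Real.holderConjugate_iff]
      refine ⟨by simpa using ENNReal.toReal_strict_mono htop hq, ?_⟩
      rw [← one_div s, hs, one_div, ENNReal.toReal_inv]
      ring
    exact lpPolar_eq_lpBall hconj.symm

end ConjugateExponent

theorem stmt19 (n : ℕ) (hn : 0 < n) (p : ℝ) (hp1 : 1 ≤ p) (hp2 : p < 2)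
    (q : ℝ≥0∞) (hq : 2 < q) (qstar : ℝ) (hqstar : 1 / qstar = 1 - (1 / q).toReal) :
    max (khintchineA p * (n : ℝ) ^ ((1 : ℝ) / 2 - (1 / q).toReal))
        (khintchineA qstar * (n : ℝ) ^ (1 / p - (1 : ℝ) / 2)) ≤
      bmDist n {x : Fin n → ℝ | ∑ i, |x i| ^ p ≤ 1}
        (if q = ∞ then {x : Fin n → ℝ | ∀ i, |x i| ≤ 1}
          else {x : Fin n → ℝ | ∑ i, |x i| ^ q.toReal ≤ 1}) := by
  obtain ⟨hs1, hs2⟩ := conjExponent_mem_Ico_of_two_lt hq hqstar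
  have hexp : (1 : ℝ) / 2 - (1 / q).toReal = 1 / qstar - 1 / 2 := by linarith
  rw [hexp, ← lpPolar_eq_ite (ENNReal.one_lt_two.trans hq) hqstar]
  exact max_khintchineA_le_bmDist hn hp1 hp2 hs1 hs2
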